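/- arXiv:2201.10730 — 3 statements merged into one kernel-verified Lean document; each statement's English description precedes it below -/
import Mathlib

section
/- Let p be a nonarchimedean (finite) prime of a number field F, let F_p be the completion of F at p, and let k ≥ 1 be an integer. A nondegenerate quadratic space V over F_p is k-universal if and only if one of the following holds: (1) dim(V) ≥ k+3; (2) k = 1 and V is isotropic of dimension 2 or 3; (3) k = 2 and V is isometric to the orthogonal sum of two hyperbolic planes H ⊥ H. -/
/-!
The completion `F_v` is a local field of characteristic different from two: complete for a discrete
valuation `w`, with finite residue field.  This is all that is used (`IsLocal`, `adic_isLocal`); the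
residue characteristic may be two.  The proof rests on two arithmetic facts about such a field.

* *Forms in five variables are isotropic* (`IsLocal.exists_isotropic`).  If `Q` is anisotropic,
  Hensel's lemma for `X ^ 2 + X + ρ`, with `ρ` in the maximal ideal, makes `w ∘ Q` satisfy an
  ultrametric inequality, so the vectors with `w (Q x) ≤ 1` form a lattice `L`, and those with `w (Q x) ≤ w π` a lattice `M`, with
  `π L ⊆ M ⊆ L`.  On `L / M` and `M / π L` the form reduces to an anisotropic quadratic form over the
  residue field, so both have dimension at most two by Chevalley-Warning, and completeness gives
  `dim ≤ 4`.
* *The norm group of a quadratic extension is proper* (`IsLocal.exists_not_isNorm`).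
  Norms from the unramified quadratic extension have even order, which settles that extension, and
  its discriminant `1 - 4 ρ`, suitably modified, is a non-norm for every ramified one.

By the first fact, a space of dimension at least four represents every scalar, and splitting off one
vector at a time shows that `k + 3 ≤ dim V` implies `k`-universality.

Conversely, Witt cancellation shows that the orthogonal complement of an anisotropic vector in a
`k`-universal space is `(k - 1)`-universal.  A universal binary space is hyperbolic by the second
fact, and a universal ternary space is isotropic: the complement of a vector whose norm is minus the
discriminant is a hyperbolic plane.  A `2`-universal space cannot be ternary, since all complements
would be hyperbolic planes and the discriminant could be any scalar.  If it is quaternary, all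
complements of anisotropic vectors are isotropic, so it represents every `⟨1, -1, c⟩`; hence the
complement of `⟨1, -1⟩` is a universal binary space, that is, a second hyperbolic plane.  A
`3`-universal space of dimension five is impossible by the same discriminant argument, and `k > 3`
reduces to `k = 3` by passing to complements.
-/

/-!
STATEMENT 0: Classification of `k`-universal quadratic spaces over the completion `F_p`
of a number field `F` at a nonarchimedean (finite) prime `p`.

A quadratic space over a field `K` is encoded by a nondegenerate symmetric bilinear form
`B : V → V → K` (with associated quadratic form `Q x = B x x`) on a finite-dimensional
`K`-vector space.  `(V, B)` represents a quadratic space `(W, B')` if there is a `K`-linear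
map `σ : W → V` with `Q (σ x) = Q' x` for all `x`, and `(V, B)` is `k`-universal if it
represents every `k`-dimensional nondegenerate quadratic space over `K` (every such space
being isometric to one on `Fin k → K`, we quantify over nondegenerate symmetric bilinear
forms on `Fin k → K`).
-/

open IsDedekindDomain HeightOneSpectrum NumberField

namespace Stmt0

/-- `B : V → V → K` is a bilinear form. -/
def IsBilinear (K : Type) [Field K] {V : Type} [AddCommGroup V] [Module K V]
    (B : V → V → K) : Prop :=
  (∀ x y z, B (x + y) z = B x z + B y z) ∧ (∀ (c : K) (x y), B (c • x) y = c * B x y) ∧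
  (∀ x y z, B x (y + z) = B x y + B x z) ∧ (∀ (c : K) (x y), B x (c • y) = c * B x y)

/-- `(V, B)` is `k`-universal over `K`: it represents every `k`-dimensional
nondegenerate quadratic space over `K`. -/
def IsKUniversal (K : Type) [Field K] {V : Type} [AddCommGroup V] [Module K V]
    (B : V → V → K) (k : ℕ) : Prop :=
  ∀ B' : (Fin k → K) → (Fin k → K) → K,
    IsBilinear K B' → (∀ x y, B' x y = B' y x) → (∀ x, (∀ y, B' x y = 0) → x = 0) →
      ∃ σ : (Fin k → K) →ₗ[K] V, ∀ x, B (σ x) (σ x) = B' x x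

section

/-! ### Completions of number fields as local fields -/

open WithZero MonoidWithZeroHom in
/-- `w` makes `K` a nonarchimedean local field: it is a discrete valuation, normalised so that a
uniformizer has value `exp (-1)`, for which `K` is complete and has finite residue field.
Completeness is recorded for sequences whose `n`-th step has value at most `exp (-n)`. -/
structure IsLocal {K : Type} [Field K] (w : Valuation K ℤᵐ⁰) : Prop where
  unif : ∃ π, w π = WithZero.exp (-1 : ℤ)
  complete : ∀ c : ℕ → K, (∀ n, w (c (n + 1) - c n) ≤ WithZero.exp (-(n : ℤ))) →
    ∃ l, ∀ n, w (l - c n) ≤ WithZero.exp (-(n : ℤ))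
  resfin : Finite (IsLocalRing.ResidueField w.valuationSubring)

lemma val_sub_le_of_step {K : Type} [Field K] {w : Valuation K (WithZero (Multiplicative ℤ))}
    {c : ℕ → K} (h : ∀ n, w (c (n + 1) - c n) ≤ WithZero.exp (-(n : ℤ))) {n m : ℕ} (hnm : n ≤ m) :
    w (c m - c n) ≤ WithZero.exp (-(n : ℤ)) := by
  induction m, hnm using Nat.le_induction with
  | base => simp
  | succ m hm ih =>
    have : c (m + 1) - c n = (c (m + 1) - c m) + (c m - c n) := by ring
    rw [this]
    refine w.map_add_le ((h m).trans ?_) ih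
    rw [WithZero.exp_le_exp]; omega

section
variable (F : Type) [Field F] [NumberField F] (v : HeightOneSpectrum (𝓞 F))

open MonoidWithZeroHom in
lemma adic_complete (c : ℕ → v.adicCompletion F)
    (hc : ∀ n, Valued.v (c (n + 1) - c n) ≤ WithZero.exp (-(n : ℤ))) :
    ∃ l, ∀ n, Valued.v (l - c n) ≤ WithZero.exp (-(n : ℤ)) := by
  have key : ∀ γ : (ValueGroup₀ (.ofClass (Valued.v : Valuation (v.adicCompletion F) _)))ˣ,
      ∃ N : ℕ, WithZero.exp (-(N : ℤ)) < ValueGroup₀.embedding (γ : ValueGroup₀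
        (.ofClass (Valued.v : Valuation (v.adicCompletion F) _))) := by
    intro γ
    have h0 : ValueGroup₀.embedding (γ : ValueGroup₀
        (.ofClass (Valued.v : Valuation (v.adicCompletion F) _))) ≠ 0 := by
      simp
    refine ⟨(-(WithZero.log (ValueGroup₀.embedding (γ : ValueGroup₀
        (.ofClass (Valued.v : Valuation (v.adicCompletion F) _))))) + 1).toNat, ?_⟩
    rw [← WithZero.lt_log_iff_exp_lt h0]
    omega
  have hC : CauchySeq c := by
    rw [CauchySeq, Valued.cauchy_iff]
    refine ⟨inferInstance, fun γ => ?_⟩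
    obtain ⟨N, hN⟩ := key γ
    refine ⟨c '' Set.Ici N, Filter.image_mem_map (Filter.Ici_mem_atTop N), ?_⟩
    rintro _ ⟨m, hm, rfl⟩ _ ⟨n, hn, rfl⟩
    rw [Valuation.restrict_lt_iff_lt_embedding]
    refine lt_of_le_of_lt ?_ hN
    have : c n - c m = (c n - c N) - (c m - c N) := by ring
    rw [this]
    exact Valuation.map_sub_le _ (val_sub_le_of_step hc hn) (val_sub_le_of_step hc hm)
  obtain ⟨l, hl⟩ := cauchySeq_tendsto_of_complete hC
  refine ⟨l, fun n => ?_⟩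
  obtain ⟨a, ha⟩ := valuedAdicCompletion_surjective F v (WithZero.exp (-(n : ℤ)))
  have hnb : {y | Valued.v (y - l) < WithZero.exp (-(n : ℤ))} ∈ nhds l := by
    rw [Valued.mem_nhds]
    refine ⟨Units.mk0 (Valued.v.restrict a) ?_, fun y hy => ?_⟩
    · rw [Ne, Valuation.restrict_eq_zero_iff, ha]; simp
    · simp only [Units.val_mk0, Set.mem_ofPred_eq, Valuation.restrict_lt_iff, ha] at hy
      exact hy
  obtain ⟨m, hm1, hm2⟩ := ((hl.eventually hnb).and (Filter.eventually_ge_atTop n)).exists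
  have : l - c n = (c m - c n) - (c m - l) := by ring
  rw [this]
  exact Valuation.map_sub_le _ (val_sub_le_of_step hc hm2) hm1.le

/-- The residue field of `F_v` is a quotient of `𝓞 F ⧸ v`, because `𝓞 F` is dense in the ring of
integers of `F_v`. -/
lemma adic_resfin : Finite (IsLocalRing.ResidueField
    (Valued.v : Valuation (v.adicCompletion F) _).valuationSubring) := by
  let O := (Valued.v : Valuation (v.adicCompletion F) _).valuationSubring
  let ψ : 𝓞 F →+* O := (algebraMap (𝓞 F) (v.adicCompletion F)).codRestrict O fun a => by
    have := v.valuation_le_one (K := F) a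
    rwa [← valuedAdicCompletion_eq_valuation] at this
  have hψ : ∀ a, (ψ a : v.adicCompletion F) =
      algebraMap F (v.adicCompletion F) (algebraMap (𝓞 F) F a) := fun a =>
    IsScalarTower.algebraMap_apply (𝓞 F) F (v.adicCompletion F) a
  have hval : ∀ k : F, Valued.v (algebraMap F (v.adicCompletion F) k) = v.valuation F k :=
    valuedAdicCompletion_eq_valuation' v
  let φ : 𝓞 F →+* IsLocalRing.ResidueField O := (IsLocalRing.residue O).comp ψ
  have hφ : ∀ a ∈ v.asIdeal, φ a = 0 := by
    intro a ha
    change IsLocalRing.residue O (ψ a) = 0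
    rw [IsLocalRing.residue_eq_zero_iff, Valuation.mem_maximalIdeal_iff, hψ, hval]
    exact (v.valuation_lt_one_iff_mem (K := F) a).2 ha
  have hsurj : Function.Surjective (Ideal.Quotient.lift v.asIdeal φ hφ) := by
    intro y
    obtain ⟨x, rfl⟩ := IsLocalRing.residue_surjective y
    have h1 : {y | Valued.v (y - (x : v.adicCompletion F)) < 1} ∈ nhds (x : v.adicCompletion F) := by
      rw [Valued.mem_nhds]
      refine ⟨1, fun y hy => ?_⟩
      simpa [Valuation.restrict_lt_one_iff] using hy
    obtain ⟨k, hk⟩ := (denseRange_algebraMap F v).exists_mem_open isOpen_interior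
      ⟨_, mem_interior_iff_mem_nhds.2 h1⟩
    replace hk := interior_subset hk
    simp only [Set.mem_ofPred_eq] at hk
    have hk1 : v.valuation F k ≤ 1 := by
      rw [← hval]
      have : algebraMap F (v.adicCompletion F) k =
        (algebraMap F (v.adicCompletion F) k - x) + x := by ring
      rw [this]
      exact Valuation.map_add_le _ hk.le x.2
    obtain ⟨a, ha⟩ := exists_valuation_sub_lt_of_integer v hk1 1
    refine ⟨Ideal.Quotient.mk _ a, ?_⟩
    rw [Ideal.Quotient.lift_mk]
    change IsLocalRing.residue O (ψ a) = _
    rw [← sub_eq_zero, ← map_sub, IsLocalRing.residue_eq_zero_iff, Valuation.mem_maximalIdeal_iff]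
    have e : ((ψ a - x : O) : v.adicCompletion F) =
        algebraMap F (v.adicCompletion F) (algebraMap (𝓞 F) F a - k)
          + (algebraMap F (v.adicCompletion F) k - x) := by
      rw [map_sub, AddSubgroupClass.coe_sub, hψ]
      ring
    rw [e]
    refine Valuation.map_add_lt _ ?_ hk
    rw [hval]
    simpa using ha
  exact Finite.of_surjective _ hsurj

lemma adic_isLocal : IsLocal (Valued.v : Valuation (v.adicCompletion F) _) where
  unif := valuedAdicCompletion_surjective F v _
  complete := adic_complete F v
  resfin := adic_resfin F v

lemma adic_two_ne_zero : (2 : v.adicCompletion F) ≠ 0 := by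
  have := (algebraMap F (v.adicCompletion F)).injective.ne (two_ne_zero (α := F))
  rwa [map_ofNat, map_zero] at this
end

end

/-! ### Hensel's lemma and quadratic forms over the residue field -/

section
open scoped WithZero
variable {K : Type} [Field K] {w : Valuation K ℤᵐ⁰}

lemma le_exp_of_lt_one {g : ℤᵐ⁰} (h : g < 1) : g ≤ WithZero.exp (-1 : ℤ) := by
  by_cases h0 : g = 0
  · simp [h0]
  · rw [← WithZero.log_le_iff_le_exp h0]
    rw [← WithZero.exp_zero, ← WithZero.log_lt_iff_lt_exp h0] at h
    omega

lemma val_two_le (w : Valuation K ℤᵐ⁰) : w 2 ≤ 1 := by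
  rw [← one_add_one_eq_two]
  exact w.map_add_le (by simp) (by simp)

lemma eq_zero_of_val_le {x : K} (h : ∀ n : ℕ, w x ≤ WithZero.exp (-(n : ℤ))) : x = 0 := by
  by_contra h0
  have h1 : w x ≠ 0 := by simpa using h0
  have := h ((-(WithZero.log (w x))).toNat + 1)
  rw [← WithZero.log_le_iff_le_exp h1] at this
  omega

/-- Hensel's lemma for monic quadratic polynomials, by Newton's iteration. -/
lemma IsLocal.hensel (hw : IsLocal w) {t ρ x : K} (h1 : w (x * x + t * x + ρ) < 1)
    (h2 : w (2 * x + t) = 1) : ∃ y, y * y + t * y + ρ = 0 := by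
  let c : ℕ → K := fun n =>
    Nat.rec x (fun _ z => z - (z * z + t * z + ρ) / (2 * z + t)) n
  have hc : ∀ n, c (n + 1) = c n - (c n * c n + t * c n + ρ) / (2 * c n + t) := fun n => rfl
  have inv : ∀ n, w (c n * c n + t * c n + ρ) ≤ WithZero.exp (-((n : ℤ) + 1)) ∧
      w (2 * c n + t) = 1 := by
    intro n
    induction n with
    | zero => exact ⟨by have := le_exp_of_lt_one h1; simpa [c] using this, h2⟩
    | succ n ih =>
      obtain ⟨ih1, ih2⟩ := ih
      have hne : 2 * c n + t ≠ 0 := by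
        intro h; rw [h] at ih2; simp at ih2
      set h := (c n * c n + t * c n + ρ) / (2 * c n + t) with hh
      have hwh : w h ≤ WithZero.exp (-((n : ℤ) + 1)) := by
        rw [hh, map_div₀, ih2, div_one]; exact ih1
      have e1 : c (n + 1) * c (n + 1) + t * c (n + 1) + ρ = h * h := by
        rw [hc, ← hh]
        have : h * (2 * c n + t) = c n * c n + t * c n + ρ := by
          rw [hh]; exact div_mul_cancel₀ _ hne
        linear_combination -this
      constructor
      · rw [e1, map_mul]
        refine (mul_le_mul' hwh hwh).trans ?_
        rw [← WithZero.exp_add, WithZero.exp_le_exp]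
        push_cast; omega
      · have e2 : 2 * c (n + 1) + t = (2 * c n + t) - 2 * h := by rw [hc, ← hh]; ring
        have : w (2 * h) < w (2 * c n + t) := by
          rw [ih2, map_mul]
          refine lt_of_le_of_lt (mul_le_mul' (val_two_le w) hwh) ?_
          rw [one_mul, ← WithZero.exp_zero, WithZero.exp_lt_exp]
          omega
        rw [e2, Valuation.map_sub_eq_of_lt_left _ this, ih2]
  obtain ⟨y, hy⟩ := hw.complete c (fun n => by
    rw [hc, sub_sub_cancel_left, Valuation.map_neg, map_div₀, (inv n).2, div_one]
    refine (inv n).1.trans ?_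
    rw [WithZero.exp_le_exp]; omega)
  refine ⟨y, eq_zero_of_val_le (w := w) fun n => ?_⟩
  have e : y * y + t * y + ρ = (c n * c n + t * c n + ρ) +
    ((y - c n) * (2 * c n + t) + (y - c n) * (y - c n)) := by ring
  rw [e]
  refine w.map_add_le ((inv n).1.trans ?_) (w.map_add_le ?_ ?_)
  · rw [WithZero.exp_le_exp]; omega
  · rw [map_mul, (inv n).2, mul_one]; exact hy n
  · rw [map_mul]
    refine (mul_le_mul' (hy n) (hy n)).trans ?_
    rw [← WithZero.exp_add, WithZero.exp_le_exp]; omega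

/-- A ternary quadratic form with integral coefficients has a primitive zero modulo the maximal
ideal (Chevalley–Warning). -/
lemma IsLocal.exists_zero_mod (hw : IsLocal w) (M : Fin 3 → Fin 3 → K)
    (hM : ∀ i j, w (M i j) ≤ 1) :
    ∃ x : Fin 3 → K, (∀ i, w (x i) ≤ 1) ∧ (∃ i, w (x i) = 1) ∧
      w (∑ i, ∑ j, M i j * x i * x j) < 1 := by
  classical
  let O := w.valuationSubring
  let k := IsLocalRing.ResidueField O
  have : Finite k := hw.resfin
  have : Fintype k := Fintype.ofFinite k
  let m : Fin 3 → Fin 3 → O := fun i j => ⟨M i j, hM i j⟩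
  let f : MvPolynomial (Fin 3) k := ∑ i, ∑ j,
    MvPolynomial.C (IsLocalRing.residue O (m i j)) * MvPolynomial.X i * MvPolynomial.X j
  have hf : f.totalDegree < Fintype.card (Fin 3) := by
    have : f.IsHomogeneous 2 := by
      refine MvPolynomial.IsHomogeneous.sum _ _ _ fun i _ =>
        MvPolynomial.IsHomogeneous.sum _ _ _ fun j _ => ?_
      exact ((MvPolynomial.isHomogeneous_C _ _).mul (MvPolynomial.isHomogeneous_X _ _)).mul
        (MvPolynomial.isHomogeneous_X _ _)
    refine lt_of_le_of_lt this.totalDegree_le ?_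
    simp
  obtain ⟨p, hp⟩ := CharP.exists k
  have hp1 : p ≠ 1 := CharP.char_ne_one k p
  have hdvd := char_dvd_card_solutions p hf
  let z0 : { x : Fin 3 → k // MvPolynomial.eval x f = 0 } := ⟨0, by simp [f]⟩
  have hcard : Fintype.card { x : Fin 3 → k // MvPolynomial.eval x f = 0 } ≠ 1 := by
    intro h; rw [h] at hdvd; exact hp1 (Nat.dvd_one.1 hdvd)
  have hcard2 : 1 < Fintype.card { x : Fin 3 → k // MvPolynomial.eval x f = 0 } := by
    have : 0 < Fintype.card { x : Fin 3 → k // MvPolynomial.eval x f = 0 } :=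
      Fintype.card_pos_iff.2 ⟨z0⟩
    omega
  obtain ⟨z, hz⟩ := Fintype.exists_ne_of_one_lt_card hcard2 z0
  choose x hx using fun i => IsLocalRing.residue_surjective (R := O) (z.1 i)
  refine ⟨fun i => x i, fun i => (x i).2, ?_, ?_⟩
  · by_contra hcon
    push Not at hcon
    apply hz
    apply Subtype.ext
    funext i
    change z.1 i = 0
    rw [← hx i, IsLocalRing.residue_eq_zero_iff, Valuation.mem_maximalIdeal_iff]
    exact lt_of_le_of_ne (x i).2 (hcon i)
  · have h0 : IsLocalRing.residue O (∑ i, ∑ j, m i j * x i * x j) = 0 := by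
      have := z.2
      simp only [f, map_sum, map_mul, MvPolynomial.eval_C, MvPolynomial.eval_X] at this
      simp only [map_sum, map_mul, hx]
      exact this
    rw [IsLocalRing.residue_eq_zero_iff, Valuation.mem_maximalIdeal_iff] at h0
    simpa [m] using h0

/-- There is a monic quadratic `X ^ 2 - X + ρ` that stays irreducible modulo the maximal ideal:
`X ^ 2 - X` takes the value `0` twice on the finite residue field, hence is not surjective. -/
lemma IsLocal.exists_artinSchreier (hw : IsLocal w) :
    ∃ ρ, w ρ ≤ 1 ∧ ∀ x, w x ≤ 1 → w (x * x - x + ρ) = 1 := by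
  let O := w.valuationSubring
  let k := IsLocalRing.ResidueField O
  have : Finite k := hw.resfin
  have hns : ¬ Function.Surjective (fun x : k => x * x - x) := by
    intro h
    have := Finite.injective_iff_surjective.2 h (a₁ := 0) (a₂ := 1) (by simp)
    exact zero_ne_one this
  rw [Function.Surjective] at hns
  push Not at hns
  obtain ⟨r, hr⟩ := hns
  obtain ⟨ρ, rfl⟩ := IsLocalRing.residue_surjective (R := O) r
  refine ⟨-ρ, by rw [Valuation.map_neg]; exact ρ.2, fun x hx => ?_⟩
  refine le_antisymm (w.map_add_le (w.map_sub_le ?_ hx) ?_) ?_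
  · rw [map_mul]; exact mul_le_one' hx hx
  · rw [Valuation.map_neg]; exact ρ.2
  · by_contra hlt
    push Not at hlt
    apply hr (IsLocalRing.residue O ⟨x, hx⟩)
    rw [← map_mul, ← map_sub, ← sub_eq_zero, ← map_sub, IsLocalRing.residue_eq_zero_iff,
      Valuation.mem_maximalIdeal_iff]
    simpa [sub_eq_add_neg] using hlt

/-- In residue characteristic two every element of the residue field is a square. -/
lemma IsLocal.exists_sq_near (hw : IsLocal w) (h2 : w 2 < 1) {u : K} (hu : w u ≤ 1) :
    ∃ r, w r ≤ 1 ∧ w (u - r * r) < 1 := by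
  let O := w.valuationSubring
  let k := IsLocalRing.ResidueField O
  have : Finite k := hw.resfin
  have hk2 : (2 : k) = 0 := by
    have : IsLocalRing.residue O 2 = 0 := by
      rw [IsLocalRing.residue_eq_zero_iff, Valuation.mem_maximalIdeal_iff]
      exact h2
    rwa [map_ofNat] at this
  have hinj : Function.Injective (fun x : k => x * x) := by
    intro a b hab
    have : (a - b) * (a - b) = 0 := by
      simp only at hab
      linear_combination hab + (b * b - a * b) * hk2
    exact sub_eq_zero.1 (mul_self_eq_zero.1 this)
  obtain ⟨r, hr⟩ := Finite.injective_iff_surjective.1 hinj (IsLocalRing.residue O ⟨u, hu⟩)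
  obtain ⟨r, rfl⟩ := IsLocalRing.residue_surjective (R := O) r
  refine ⟨r, r.2, ?_⟩
  simp only at hr
  rw [← map_mul, ← sub_eq_zero, ← map_sub, IsLocalRing.residue_eq_zero_iff,
      Valuation.mem_maximalIdeal_iff] at hr
  rw [Valuation.map_sub_swap]
  simpa using hr
end

/-! ### Proper norm groups -/

section
open scoped WithZero
variable {K : Type} [Field K] {w : Valuation K ℤᵐ⁰}

/-- `c` is a value of the norm form `x ^ 2 - δ * y ^ 2`, zero included. -/
def IsNorm (δ c : K) : Prop := ∃ x y, c = x * x - δ * (y * y)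

lemma isSquare_exp_iff {n : ℤ} : IsSquare (WithZero.exp n) ↔ Even n := by
  constructor
  · rintro ⟨g, hg⟩
    have h0 : g ≠ 0 := by rintro rfl; simp at hg
    refine ⟨WithZero.log g, ?_⟩
    rw [← WithZero.log_mul h0 h0, ← hg, WithZero.log_exp]
  · rintro ⟨m, rfl⟩
    exact ⟨WithZero.exp m, WithZero.exp_add _ _⟩

lemma IsLocal.exists_val (hw : IsLocal w) (g : ℤᵐ⁰) : ∃ z, w z = g := by
  by_cases h0 : g = 0
  · exact ⟨0, by simp [h0]⟩
  obtain ⟨π, hπ⟩ := hw.unif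
  refine ⟨π ^ (-(WithZero.log g)), ?_⟩
  rw [map_zpow₀, hπ, ← WithZero.exp_zsmul]
  simp [WithZero.exp_log h0]

lemma isSquare_val_mul_sq {a y : K} (hy : y ≠ 0) : IsSquare (w (a * (y * y))) ↔ IsSquare (w a) := by
  have h0 : w y ≠ 0 := by simpa using hy
  constructor
  · rintro ⟨g, hg⟩
    refine ⟨g / w y, ?_⟩
    rw [map_mul, map_mul] at hg
    rw [div_mul_div_comm, ← hg, mul_div_cancel_right₀ _ (mul_ne_zero h0 h0)]
  · rintro ⟨g, hg⟩
    exact ⟨g * w y, by rw [map_mul, map_mul, hg]; exact mul_mul_mul_comm _ _ _ _⟩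

/-- If `X ^ 2 + t X + ρ` has no root modulo the maximal ideal, then its homogenisation takes only
values of even order: it is the norm form of an unramified extension. -/
lemma val_unramified {t ρ : K} (ht : w t ≤ 1) (hρ : w ρ ≤ 1)
    (H : ∀ x, w x ≤ 1 → w (x * x + t * x + ρ) = 1) (X Y : K) :
    w (X * X + t * X * Y + ρ * (Y * Y)) = max (w X) (w Y) * max (w X) (w Y) := by
  rcases le_or_gt (w X) (w Y) with h | h
  · rw [max_eq_right h]
    by_cases hY : Y = 0
    · have hX : X = 0 := by simpa [hY] using h
      simp [hX, hY]
    have hY' : w Y ≠ 0 := by simpa using hY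
    have e : X * X + t * X * Y + ρ * (Y * Y) =
        ((X / Y) * (X / Y) + t * (X / Y) + ρ) * (Y * Y) := by field_simp
    rw [e, map_mul, H, one_mul, map_mul]
    rw [map_div₀]
    exact div_le_one_of_le₀ h zero_le
  · rw [max_eq_left h.le]
    have hX0 : 0 < w X := lt_of_le_of_lt zero_le h
    have h1 : w (t * X * Y + ρ * (Y * Y)) < w (X * X) := by
      have hXX : w X * w Y < w X * w X := by
        rw [mul_comm (w X) (w Y)]
        exact mul_lt_mul_of_pos_right h hX0
      rw [map_mul w X X]
      refine w.map_add_lt ?_ ?_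
      · rw [map_mul, map_mul]
        refine lt_of_le_of_lt ?_ hXX
        exact mul_le_mul' (mul_le_of_le_one_left' ht) le_rfl
      · rw [map_mul, map_mul]
        refine lt_of_le_of_lt ?_ hXX
        exact (mul_le_of_le_one_left' hρ).trans (mul_le_mul' h.le le_rfl)
    rw [add_assoc, Valuation.map_add_eq_of_lt_left _ h1, map_mul]

lemma isSquare_val_of_isNorm {t ρ : K} (ht : w t ≤ 1) (hρ : w ρ ≤ 1)
    (H : ∀ x, w x ≤ 1 → w (x * x + t * x + ρ) = 1) {c : K} (hc : IsNorm (t * t - 4 * ρ) c) :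
    IsSquare (w c) := by
  obtain ⟨x, y, rfl⟩ := hc
  have e : x * x - (t * t - 4 * ρ) * (y * y) =
    (x - t * y) * (x - t * y) + t * (x - t * y) * (2 * y) + ρ * ((2 * y) * (2 * y)) := by ring
  rw [e, val_unramified ht hρ H]
  exact ⟨_, rfl⟩

lemma disc_ne_sq (h2 : (2 : K) ≠ 0) {t ρ : K} (ht : w t ≤ 1) (hρ : w ρ ≤ 1)
    (H : ∀ x, w x ≤ 1 → w (x * x + t * x + ρ) = 1) (s : K) : t * t - 4 * ρ ≠ s * s := by
  intro hs
  have := val_unramified ht hρ H (s - t) 2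
  rw [show (s - t) * (s - t) + t * (s - t) * 2 + ρ * (2 * 2) = 0 by linear_combination -hs,
    map_zero] at this
  have h : max (w (s - t)) (w 2) ≠ 0 := by
    refine ne_of_gt (lt_of_lt_of_le ?_ (le_max_right _ _))
    exact (Valuation.pos_iff _).2 h2
  exact mul_ne_zero h h this.symm

/-- Approximation of a unit by squares: the order of the defect `δ - t ^ 2` can be pushed up to
that of `4` unless it gets stuck at a smaller odd number. -/
lemma IsLocal.exists_defect (hw : IsLocal w) (h2 : (2 : K) ≠ 0) {δ : K} (hδ : w δ = 1) :
    ∃ t, w t ≤ 1 ∧ (w (δ - t * t) ≤ w 4 ∨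
      (¬ IsSquare (w (δ - t * t)) ∧ w 4 < w (δ - t * t) ∧ w (δ - t * t) < 1)) := by
  have h4 : w 4 = w 2 * w 2 := by rw [← map_mul]; norm_num
  have h40 : w 4 ≠ 0 := by rw [h4]; simpa using h2
  have key : ∀ n : ℕ, ∃ t, w t ≤ 1 ∧ (w (δ - t * t) ≤ WithZero.exp (-(n : ℤ)) ∨
      (w (δ - t * t) ≤ w 4 ∨
      (¬ IsSquare (w (δ - t * t)) ∧ w 4 < w (δ - t * t) ∧ w (δ - t * t) < 1))) := by
    intro n
    induction n with
    | zero => exact ⟨0, by simp, Or.inl (by simp [hδ])⟩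
    | succ n ih =>
      obtain ⟨t, ht, h | h⟩ := ih
      swap
      · exact ⟨t, ht, Or.inr h⟩
      by_cases hlt : w (δ - t * t) < WithZero.exp (-(n : ℤ))
      · refine ⟨t, ht, Or.inl ?_⟩
        by_cases h0 : w (δ - t * t) = 0
        · rw [h0]; exact zero_le
        rw [← WithZero.log_lt_iff_lt_exp h0] at hlt
        rw [← WithZero.log_le_iff_le_exp h0]
        push_cast; omega
      have heq : w (δ - t * t) = WithZero.exp (-(n : ℤ)) := le_antisymm h (not_lt.1 hlt)
      rcases le_or_gt (w (δ - t * t)) (w 4) with h4' | h4'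
      · exact ⟨t, ht, Or.inr (Or.inl h4')⟩
      have hle1 : WithZero.exp (-(n : ℤ)) ≤ 1 := by
        rw [← WithZero.exp_zero, WithZero.exp_le_exp]; omega
      by_cases hsq : IsSquare (w (δ - t * t))
      · rw [heq] at hsq
        obtain ⟨g, hg⟩ := hsq
        obtain ⟨z, rfl⟩ := hw.exists_val g
        have hz0 : z ≠ 0 := by rintro rfl; simp at hg
        have hzp : 0 < w z := (Valuation.pos_iff _).2 hz0
        have hz1 : w z ≤ 1 := by
          by_contra hcon
          push Not at hcon
          have := mul_lt_mul'' hcon hcon zero_le_one zero_le_one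
          rw [one_mul, ← hg] at this
          exact absurd this (not_lt.2 hle1)
        -- the residue characteristic is two, so the unit `(δ - t ^ 2) / z ^ 2` is a square `r ^ 2`
        -- modulo the maximal ideal, and `t + z * r` is a better approximation than `t`
        have h2z : w 2 < w z := by
          by_contra hcon
          push Not at hcon
          have := mul_le_mul' hcon hcon
          rw [← hg, ← h4, ← heq] at this
          exact absurd h4' (not_lt.2 this)
        have hu : w ((δ - t * t) / (z * z)) ≤ 1 := by
          rw [map_div₀, map_mul, heq, hg]
          exact div_le_one_of_le₀ le_rfl zero_le
        obtain ⟨r, hr, hr'⟩ := hw.exists_sq_near (h2z.trans_le hz1) hu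
        refine ⟨t + z * r, w.map_add_le ht ?_, Or.inl ?_⟩
        · rw [map_mul]; exact mul_le_one' hz1 hr
        have e : δ - (t + z * r) * (t + z * r) =
            ((δ - t * t) / (z * z) - r * r) * (z * z) - 2 * (z * (t * r)) := by
          field_simp; ring
        have hlt' : w (δ - (t + z * r) * (t + z * r)) < WithZero.exp (-(n : ℤ)) := by
          rw [e, hg, sub_eq_add_neg]
          refine w.map_add_lt ?_ ?_
          · rw [map_mul, map_mul]
            exact mul_lt_of_lt_one_left (mul_pos hzp hzp) hr'
          · rw [Valuation.map_neg, map_mul, map_mul, map_mul]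
            have h3 : w z * (w t * w r) ≤ w z := mul_le_of_le_one_right' (mul_le_one' ht hr)
            exact lt_of_le_of_lt (mul_le_mul' le_rfl h3) (mul_lt_mul_of_pos_right h2z hzp)
        by_cases h0 : w (δ - (t + z * r) * (t + z * r)) = 0
        · rw [h0]; exact zero_le
        rw [← WithZero.log_lt_iff_lt_exp h0] at hlt'
        rw [← WithZero.log_le_iff_le_exp h0]
        push_cast; omega
      · refine ⟨t, ht, Or.inr (Or.inr ⟨hsq, h4', ?_⟩)⟩
        refine lt_of_le_of_ne (heq ▸ hle1) fun h1 => hsq ?_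
        rw [h1]; exact ⟨1, (mul_one 1).symm⟩
  obtain ⟨t, ht, h | h⟩ := key (-(WithZero.log (w 4))).toNat
  · refine ⟨t, ht, Or.inl (h.trans ?_)⟩
    rw [← WithZero.le_log_iff_exp_le h40]
    omega
  · exact ⟨t, ht, h⟩

/-- The norm index is at least two for unit discriminants.  A unit is, up to squares, either the
discriminant of an unramified extension, where a uniformizer is not a norm, or `1 - a` with `a` of
odd order below that of `4`.  In the latter case the witness is `1 - 4 * ρ / a`, where `1 - 4 * ρ`
generates the unramified extension. -/
lemma IsLocal.exists_not_isNorm_unit (hw : IsLocal w) (h2 : (2 : K) ≠ 0) {δ : K}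
    (hδ : w δ = 1) (hns : ¬ IsSquare δ) : ∃ c, c ≠ 0 ∧ ¬ IsNorm δ c := by
  have h40 : (4 : K) ≠ 0 := by
    have : (4 : K) = 2 * 2 := by norm_num
    rw [this]; exact mul_ne_zero h2 h2
  obtain ⟨t, ht, h | ⟨hodd, h4a, ha1⟩⟩ := hw.exists_defect h2 hδ
  · obtain ⟨ρ, hρ⟩ : ∃ ρ, δ = t * t - 4 * ρ := ⟨(t * t - δ) / 4, by field_simp; ring⟩
    have hρ1 : w ρ ≤ 1 := by
      rw [hρ, show t * t - 4 * ρ - t * t = -(4 * ρ) by ring, Valuation.map_neg, map_mul] at h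
      by_contra hcon
      push Not at hcon
      have := lt_mul_of_one_lt_right ((Valuation.pos_iff w).2 h40) hcon
      exact absurd h (not_le.2 this)
    by_cases H : ∀ x, w x ≤ 1 → w (x * x + t * x + ρ) = 1
    · obtain ⟨π, hπ⟩ := hw.unif
      refine ⟨π, by rintro rfl; exact WithZero.exp_ne_zero (hπ.symm.trans (map_zero w)), fun hn => ?_⟩
      rw [hρ] at hn
      have := isSquare_val_of_isNorm ht hρ1 H hn
      rw [hπ, isSquare_exp_iff] at this
      exact absurd this (by decide)
    · exfalso
      push Not at H
      obtain ⟨x, hx, hx1⟩ := H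
      have hlt : w (x * x + t * x + ρ) < 1 := by
        refine lt_of_le_of_ne (w.map_add_le (w.map_add_le ?_ ?_) hρ1) hx1
        · rw [map_mul]; exact mul_le_one' hx hx
        · rw [map_mul]; exact mul_le_one' ht hx
      have hd : w (2 * x + t) * w (2 * x + t) = 1 := by
        rw [← map_mul, show (2 * x + t) * (2 * x + t) = δ + 4 * (x * x + t * x + ρ) by
          rw [hρ]; ring, ← hδ]
        refine Valuation.map_add_eq_of_lt_left _ ?_
        rw [hδ, map_mul]
        refine lt_of_le_of_lt (mul_le_of_le_one_left' ?_) hlt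
        rw [show (4 : K) = 2 * 2 by norm_num, map_mul]
        exact mul_le_one' (val_two_le w) (val_two_le w)
      have hd1 : w (2 * x + t) = 1 := by
        rcases lt_trichotomy (w (2 * x + t)) 1 with h' | h' | h'
        · exact absurd hd (ne_of_lt (mul_lt_one_of_nonneg_of_lt_one_left zero_le h' h'.le))
        · exact h'
        · exact absurd hd (ne_of_gt (one_lt_mul'' h' h'))
      obtain ⟨y, hy⟩ := hw.hensel hlt hd1
      exact hns ⟨2 * y + t, by rw [hρ]; linear_combination (-4) * hy⟩
  · obtain ⟨ρ, hρ1, H⟩ := hw.exists_artinSchreier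
    have H' : ∀ x, w x ≤ 1 → w (x * x + (-1) * x + ρ) = 1 := fun x hx => by
      rw [show x * x + (-1) * x + ρ = x * x - x + ρ by ring]; exact H x hx
    have hm1 : w (-1) ≤ 1 := by simp
    have htt : w (t * t) = 1 := by
      rw [show t * t = δ - (δ - t * t) by ring, ← hδ]
      exact Valuation.map_sub_eq_of_lt_left _ (by rw [hδ]; exact ha1)
    have ht0 : t ≠ 0 := by rintro rfl; simp at htt
    -- `δ / t ^ 2 = 1 - a`
    obtain ⟨a, ha⟩ : ∃ a, δ = (1 - a) * (t * t) := ⟨1 - δ / (t * t), by field_simp; ring⟩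
    have hwa : w (δ - t * t) = w a := by
      rw [ha, show (1 - a) * (t * t) - t * t = -(a * (t * t)) by ring, Valuation.map_neg,
        map_mul, htt, mul_one]
    rw [hwa] at hodd h4a ha1
    have ha0 : a ≠ 0 := by rintro rfl; exact hodd (by simp)
    have hb : w (4 * ρ / a) < 1 := by
      rw [map_div₀, map_mul, div_lt_one₀ ((Valuation.pos_iff w).2 ha0)]
      exact lt_of_le_of_lt (mul_le_of_le_one_right' hρ1) h4a
    have hc1 : w (1 - 4 * ρ / a) = 1 := by
      rw [Valuation.map_sub_eq_of_lt_left _ (by simpa using hb), map_one]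
    have hA1 : w (1 - a) = 1 := by
      rw [Valuation.map_sub_eq_of_lt_left _ (by simpa using ha1), map_one]
    refine ⟨1 - 4 * ρ / a, fun h0 => by rw [h0] at hc1; simp at hc1, ?_⟩
    rintro ⟨x', y', hxy1⟩
    -- `a = 1 - (1 - a)` is a norm, hence so is `a * c`
    obtain ⟨x, y, hxy⟩ : ∃ x y, a * (1 - 4 * ρ / a) = x * x - (1 - a) * (y * y) :=
      ⟨x' + (1 - a) * (t * y'), x' + t * y', by rw [hxy1, ha]; ring⟩
    have hxy2 : a - 4 * ρ = x * x - (1 - a) * (y * y) := by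
      rw [← hxy]; field_simp
    by_cases hy : y = 1
    · refine disc_ne_sq h2 hm1 hρ1 H' x ?_
      rw [hy] at hxy2
      linear_combination hxy2
    -- otherwise the equation exhibits `-(1 - a) * (a - 4 * ρ) * (y - 1) ^ 2`, of odd order, as a
    -- norm from the unramified extension
    · have hW : y - 1 ≠ 0 := sub_ne_zero.2 hy
      have : IsNorm ((-1) * (-1) - 4 * ρ) (-((1 - a) * (a - 4 * ρ)) * ((y - 1) * (y - 1))) := by
        refine ⟨(1 - a) * y + (a - 4 * ρ), x, ?_⟩
        linear_combination (4 * ρ - 1) * hxy2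
      have := isSquare_val_of_isNorm hm1 hρ1 H' this
      rw [isSquare_val_mul_sq hW, Valuation.map_neg, map_mul, hA1, one_mul,
        show a - 4 * ρ = a * (1 - 4 * ρ / a) by field_simp, map_mul, hc1, mul_one] at this
      exact hodd this

/-- The norm group of a quadratic extension of a local field is proper. -/
theorem IsLocal.exists_not_isNorm (hw : IsLocal w) (h2 : (2 : K) ≠ 0) {δ : K}
    (hns : ¬ IsSquare δ) : ∃ c, c ≠ 0 ∧ ¬ IsNorm δ c := by
  by_cases hsq : IsSquare (w δ)
  · obtain ⟨g, hg⟩ := hsq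
    obtain ⟨z, rfl⟩ := hw.exists_val g
    have hz : z ≠ 0 := by
      rintro rfl
      have : δ = 0 := by simpa using hg
      exact hns ⟨0, by simp [this]⟩
    have hzz : w z * w z ≠ 0 := by simpa using hz
    obtain ⟨c, hc, hn⟩ := hw.exists_not_isNorm_unit h2 (δ := δ / (z * z))
      (by rw [map_div₀, map_mul, hg, div_self hzz])
      (by
        rintro ⟨s, hs⟩
        refine hns ⟨s * z, ?_⟩
        field_simp at hs
        linear_combination hs)
    refine ⟨c, hc, ?_⟩
    rintro ⟨x, y, rfl⟩
    exact hn ⟨x, z * y, by field_simp⟩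
  -- `δ` has odd order, hence is not a norm from the unramified extension `K(√(1 - 4 * ρ))`;
  -- by symmetry `1 - 4 * ρ` is not a norm from `K(√δ)`
  · obtain ⟨ρ, hρ1, H⟩ := hw.exists_artinSchreier
    have H' : ∀ x, w x ≤ 1 → w (x * x + (-1) * x + ρ) = 1 := fun x hx => by
      rw [show x * x + (-1) * x + ρ = x * x - x + ρ by ring]; exact H x hx
    have hm1 : w (-1) ≤ 1 := by simp
    have hne := disc_ne_sq h2 hm1 hρ1 H'
    refine ⟨(-1) * (-1) - 4 * ρ, by simpa using hne 0, ?_⟩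
    rintro ⟨x, y, hxy⟩
    have hy : y ≠ 0 := by
      rintro rfl
      exact hne x (by simpa using hxy)
    have := isSquare_val_of_isNorm hm1 hρ1 H' (c := δ * (y * y)) ⟨x, 1, by
      linear_combination hxy⟩
    rw [isSquare_val_mul_sq hy] at this
    exact hsq this
end

/-! ### Isotropy in five variables -/

section
open scoped WithZero
variable {K : Type} [Field K] {w : Valuation K ℤᵐ⁰} {V : Type} [AddCommGroup V] [Module K V]

/-- On an anisotropic space the polar form is bounded by the quadratic form: otherwise Hensel's
lemma produces an isotropic vector in the plane spanned by `x` and `y`. -/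
lemma IsLocal.val_polar_le (hw : IsLocal w) {B : LinearMap.BilinForm K V}
    (hs : ∀ x y, B x y = B y x) (hani : ∀ x, B x x = 0 → x = 0) {x y : V} {g : ℤᵐ⁰}
    (hx : w (B x x) ≤ g) (hy : w (B y y) ≤ g) : w (2 * B x y) ≤ g := by
  by_contra hcon
  push Not at hcon
  set β := 2 * B x y with hβ
  have hβp : 0 < w β := lt_of_le_of_lt zero_le hcon
  have hβ0 : β ≠ 0 := (Valuation.pos_iff w).1 hβp
  have hx0 : B x x ≠ 0 := by
    intro h
    have := hani x h
    simp [hβ, this] at hβ0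
  have h1 : w (B x x / β * (B y y / β)) < 1 := by
    rw [map_mul, map_div₀, map_div₀]
    exact mul_lt_one_of_nonneg_of_lt_one_left zero_le ((div_lt_one₀ hβp).2 (hx.trans_lt hcon))
      (div_le_one_of_le₀ (hy.trans hcon.le) zero_le)
  obtain ⟨Z, hZ⟩ := hw.hensel (t := 1) (ρ := B x x / β * (B y y / β)) (x := 0)
    (by simpa using h1) (by simp)
  have hQ : B ((Z / (B x x / β)) • x + y) ((Z / (B x x / β)) • x + y) = 0 := by
    have : B ((Z / (B x x / β)) • x + y) ((Z / (B x x / β)) • x + y) =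
      (Z / (B x x / β)) * (Z / (B x x / β)) * B x x + (Z / (B x x / β)) * β + B y y := by
      simp only [map_add, LinearMap.add_apply, map_smul, LinearMap.smul_apply, smul_eq_mul, hβ,
        hs y x]
      ring
    rw [this]
    have e : (Z / (B x x / β)) * (Z / (B x x / β)) * B x x + (Z / (B x x / β)) * β + B y y =
      β * β / B x x * (Z * Z + 1 * Z + B x x / β * (B y y / β)) := by
      field_simp
    rw [e, hZ, mul_zero]
  have hzero := hani _ hQ
  have hy' : y = -((Z / (B x x / β)) • x) := by
    rw [add_comm] at hzero
    exact eq_neg_of_add_eq_zero_left hzero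
  have h2Z : 2 * Z + 1 = 0 := by
    have : β = 2 * (-(Z / (B x x / β)) * B x x) := by
      rw [hβ]
      nth_rewrite 1 [hy']
      simp only [map_neg, map_smul, smul_eq_mul, ← hβ]
      ring
    field_simp at this
    linear_combination this
  -- the discriminant of `Z ^ 2 + Z + ρ` vanishes, although `ρ` lies in the maximal ideal
  have h4 : 4 * (B x x / β * (B y y / β)) = 1 := by
    linear_combination 4 * hZ - (2 * Z + 1) * h2Z
  have h5 := congrArg w h4
  rw [map_mul, map_one] at h5
  refine absurd h5 (ne_of_lt (lt_of_le_of_lt (mul_le_of_le_one_left' ?_) h1))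
  rw [show (4 : K) = 2 * 2 by norm_num, map_mul]
  exact mul_le_one' (val_two_le w) (val_two_le w)

lemma IsLocal.val_add_le (hw : IsLocal w) {B : LinearMap.BilinForm K V}
    (hs : ∀ x y, B x y = B y x) (hani : ∀ x, B x x = 0 → x = 0) {x y : V} {g : ℤᵐ⁰}
    (hx : w (B x x) ≤ g) (hy : w (B y y) ≤ g) : w (B (x + y) (x + y)) ≤ g := by
  have : B (x + y) (x + y) = B x x + 2 * B x y + B y y := by
    simp only [map_add, LinearMap.add_apply, hs y x]; ring
  rw [this]
  exact w.map_add_le (w.map_add_le hx (hw.val_polar_le hs hani hx hy)) hy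

lemma val_smul_eq (B : LinearMap.BilinForm K V) (c : K) (x : V) :
    w (B (c • x) (c • x)) = w c * w c * w (B x x) := by
  simp only [map_smul, LinearMap.smul_apply, smul_eq_mul, map_mul, mul_assoc]

lemma val_smul_le (B : LinearMap.BilinForm K V) {c : K} (hc : w c ≤ 1) {x : V} {g : ℤᵐ⁰}
    (hx : w (B x x) ≤ g) : w (B (c • x) (c • x)) ≤ g := by
  rw [val_smul_eq]
  exact (mul_le_of_le_one_left' (mul_le_one' hc hc)).trans hx

lemma lt_val_iff {s : K} (hs : s ≠ 0) {a : K} :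
    w a < w s ↔ w a ≤ WithZero.exp (-1 : ℤ) * w s := by
  have hp : 0 < w s := (Valuation.pos_iff w).2 hs
  rw [← div_lt_one₀ hp, ← div_le_iff₀ hp]
  refine ⟨le_exp_of_lt_one, fun h => lt_of_le_of_lt h ?_⟩
  rw [← WithZero.exp_zero, WithZero.exp_lt_exp]; omega

/-- Any three vectors of the lattice `w Q ≤ w s` are linearly dependent over the residue field
modulo the lattice `w Q < w s`. -/
lemma IsLocal.exists_comb (hw : IsLocal w) {B : LinearMap.BilinForm K V}
    (hs : ∀ x y, B x y = B y x) (hani : ∀ x, B x x = 0 → x = 0) {s : K} (hs0 : s ≠ 0)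
    {x y z : V} (hx : w (B x x) ≤ w s) (hy : w (B y y) ≤ w s) (hz : w (B z z) ≤ w s) :
    ∃ a b c : K, w a ≤ 1 ∧ w b ≤ 1 ∧ w c ≤ 1 ∧ (w a = 1 ∨ w b = 1 ∨ w c = 1) ∧
      w (B (a • x + b • y + c • z) (a • x + b • y + c • z)) < w s := by
  have hp : 0 < w s := (Valuation.pos_iff w).2 hs0
  have hd : ∀ {q : K}, w q ≤ w s → w (q / s) ≤ 1 := fun {q} h => by
    rw [map_div₀]; exact div_le_one_of_le₀ h zero_le
  have hxy := hw.val_polar_le hs hani hx hy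
  have hxz := hw.val_polar_le hs hani hx hz
  have hyz := hw.val_polar_le hs hani hy hz
  obtain ⟨a, ha, ⟨i, hi⟩, hlt⟩ := hw.exists_zero_mod
    ![![B x x / s, 2 * B x y / s, 2 * B x z / s], ![0, B y y / s, 2 * B y z / s],
      ![0, 0, B z z / s]]
    (by
      intro i j
      fin_cases i <;> fin_cases j <;>
        simp only [Fin.zero_eta, Fin.mk_one, Fin.reduceFinMk, Matrix.cons_val, Fin.isValue,
          map_zero, zero_le]
      exacts [hd hx, hd hxy, hd hxz, hd hy, hd hyz, hd hz])
  refine ⟨a 0, a 1, a 2, ha 0, ha 1, ha 2, ?_, ?_⟩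
  · fin_cases i
    · exact Or.inl hi
    · exact Or.inr (Or.inl hi)
    · exact Or.inr (Or.inr hi)
  · rw [← div_lt_one₀ hp, ← map_div₀]
    convert hlt using 2
    simp only [Fin.sum_univ_three, map_add, LinearMap.add_apply, map_smul, LinearMap.smul_apply,
      smul_eq_mul, hs y x, hs z x, hs z y, Matrix.cons_val, Fin.isValue]
    field_simp
    ring

/-- The residue space of the lattice `w Q ≤ w s` has dimension at most two. -/
lemma IsLocal.exists_two_gen (hw : IsLocal w) {B : LinearMap.BilinForm K V}
    (hs : ∀ x y, B x y = B y x) (hani : ∀ x, B x x = 0 → x = 0) {s : K} (hs0 : s ≠ 0) :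
    ∃ e f : V, w (B e e) ≤ w s ∧ w (B f f) ≤ w s ∧ ∀ x, w (B x x) ≤ w s → ∃ a b : K,
      w a ≤ 1 ∧ w b ≤ 1 ∧
      w (B (x - (a • e + b • f)) (x - (a • e + b • f))) < w s := by
  have hp : 0 < w s := (Valuation.pos_iff w).2 hs0
  have hadd : ∀ {x y : V}, w (B x x) < w s → w (B y y) < w s →
      w (B (x + y) (x + y)) < w s := fun {x y} h1 h2 => by
    rw [lt_val_iff hs0] at *
    exact hw.val_add_le hs hani h1 h2
  have hsm : ∀ {c : K} {x : V}, w c ≤ 1 → w (B x x) < w s → w (B (c • x) (c • x)) < w s :=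
    fun {c x} h1 h2 => by
      rw [lt_val_iff hs0] at *
      exact val_smul_le B h1 h2
  have hsm' : ∀ {c : K} {x : V}, w c < 1 → w (B x x) ≤ w s → w (B (c • x) (c • x)) < w s :=
    fun {c x} h1 h2 => by
      rw [val_smul_eq]
      refine lt_of_le_of_lt (mul_le_mul' le_rfl h2) (mul_lt_of_lt_one_left hp ?_)
      exact mul_lt_one_of_nonneg_of_lt_one_left zero_le h1 h1.le
  have hinv : ∀ {c : K}, w c = 1 → w (-c⁻¹) ≤ 1 := fun {c} h => by
    rw [Valuation.map_neg, map_inv₀, h, inv_one]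
  have hne : ∀ {c : K}, w c = 1 → c ≠ 0 := fun {c} h h0 => by simp [h0] at h
  by_cases h1 : ∀ x, w (B x x) ≤ w s → w (B x x) < w s
  · exact ⟨0, 0, by simp, by simp, fun x hx => ⟨0, 0, by simp, by simp, by simpa using h1 x hx⟩⟩
  push Not at h1
  obtain ⟨e, he, he1⟩ := h1
  by_cases h2 : ∀ x, w (B x x) ≤ w s → ∃ a : K, w a ≤ 1 ∧ w (B (x - a • e) (x - a • e)) < w s
  · refine ⟨e, 0, he, by simp, fun x hx => ?_⟩
    obtain ⟨a, ha, h⟩ := h2 x hx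
    exact ⟨a, 0, ha, by simp, by simpa using h⟩
  push Not at h2
  obtain ⟨f, hf, hf'⟩ := h2
  refine ⟨e, f, he, hf, fun x hx => ?_⟩
  obtain ⟨a, b, c, ha, hb, hc, hu, hlt⟩ := hw.exists_comb hs hani hs0 he hf hx
  by_cases hc1 : w c = 1
  · have hc0 := hne hc1
    refine ⟨-c⁻¹ * a, -c⁻¹ * b, by rw [map_mul]; exact mul_le_one' (hinv hc1) ha,
      by rw [map_mul]; exact mul_le_one' (hinv hc1) hb, ?_⟩
    have h3 : w c⁻¹ ≤ 1 := by rw [map_inv₀, hc1, inv_one]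
    have := hsm h3 hlt
    rwa [show c⁻¹ • (a • e + b • f + c • x) = x - ((-c⁻¹ * a) • e + (-c⁻¹ * b) • f) by
      rw [smul_add, smul_add, smul_smul c⁻¹ c, inv_mul_cancel₀ hc0, one_smul]; module] at this
  · exfalso
    have h4 : w (B (a • e + b • f) (a • e + b • f)) < w s := by
      have := hadd hlt (hsm' (c := -c) (by
        rw [Valuation.map_neg]; exact lt_of_le_of_ne hc hc1) hx)
      rwa [show a • e + b • f + c • x + -c • x = a • e + b • f by module] at this
    by_cases hb1 : w b = 1
    · have hb0 := hne hb1
      refine absurd ?_ (not_lt.2 (hf' (-b⁻¹ * a) (by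
        rw [map_mul]; exact mul_le_one' (hinv hb1) ha)))
      have h3 : w b⁻¹ ≤ 1 := by rw [map_inv₀, hb1, inv_one]
      have := hsm h3 h4
      rwa [show b⁻¹ • (a • e + b • f) = f - (-b⁻¹ * a) • e by
        rw [smul_add, smul_smul b⁻¹ b, inv_mul_cancel₀ hb0, one_smul]; module] at this
    · have ha1 : w a = 1 := by tauto
      have ha0 := hne ha1
      have h5 : w (B (a • e) (a • e)) < w s := by
        have := hadd h4 (hsm' (c := -b) (by
          rw [Valuation.map_neg]; exact lt_of_le_of_ne hb hb1) hf)
        rwa [show a • e + b • f + -b • f = a • e by module] at this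
      have h3 : w a⁻¹ ≤ 1 := by rw [map_inv₀, ha1, inv_one]
      have := hsm h3 h5
      rw [smul_smul, inv_mul_cancel₀ ha0, one_smul] at this
      exact absurd this (not_lt.2 he1)

/-- The unit lattice of an anisotropic space is generated by four vectors modulo a uniformizer,
two from each of the two residue spaces. -/
lemma IsLocal.exists_four_gen (hw : IsLocal w) {B : LinearMap.BilinForm K V}
    (hs : ∀ x y, B x y = B y x) (hani : ∀ x, B x x = 0 → x = 0) {π : K}
    (hπ : w π = WithZero.exp (-1 : ℤ)) :
    ∃ e : Fin 4 → V, (∀ i, w (B (e i) (e i)) ≤ 1) ∧ ∀ x, w (B x x) ≤ 1 →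
      ∃ (a : Fin 4 → K) (x' : V), (∀ i, w (a i) ≤ 1) ∧ w (B x' x') ≤ 1 ∧
        x = ∑ i, a i • e i + π • x' := by
  have hπ0 : π ≠ 0 := by rintro rfl; exact WithZero.exp_ne_zero (hπ.symm.trans (map_zero w))
  have hπ1 : w π ≤ 1 := by
    rw [hπ, ← WithZero.exp_zero, WithZero.exp_le_exp]; omega
  obtain ⟨e₁, e₂, h1, h2, H⟩ := hw.exists_two_gen hs hani (s := 1) one_ne_zero
  obtain ⟨e₃, e₄, h3, h4, H'⟩ := hw.exists_two_gen hs hani hπ0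
  rw [map_one] at h1 h2 H
  refine ⟨![e₁, e₂, e₃, e₄], ?_, fun x hx => ?_⟩
  · intro i
    fin_cases i
    exacts [h1, h2, h3.trans hπ1, h4.trans hπ1]
  obtain ⟨a, b, ha, hb, hlt⟩ := H x hx
  have hle := le_exp_of_lt_one hlt
  rw [← hπ] at hle
  obtain ⟨c, d, hc, hd, hlt'⟩ := H' _ hle
  rw [lt_val_iff hπ0, ← hπ] at hlt'
  refine ⟨![a, b, c, d], π⁻¹ • (x - (a • e₁ + b • e₂) - (c • e₃ + d • e₄)), ?_, ?_, ?_⟩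
  · intro i
    fin_cases i
    exacts [ha, hb, hc, hd]
  · rw [val_smul_eq, map_inv₀]
    have hp : 0 < w π := (Valuation.pos_iff w).2 hπ0
    calc _ ≤ (w π)⁻¹ * (w π)⁻¹ * (w π * w π) := mul_le_mul' le_rfl hlt'
      _ = 1 := by field_simp
  · rw [smul_smul, mul_inv_cancel₀ hπ0, one_smul]
    simp only [Fin.sum_univ_four, Matrix.cons_val, Fin.isValue]
    module

/-- Over a nonarchimedean local field every quadratic form in at least five variables is
isotropic. -/
theorem IsLocal.exists_isotropic (hw : IsLocal w) [FiniteDimensional K V]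
    (B : LinearMap.BilinForm K V) (hs : ∀ x y, B x y = B y x) (h5 : 5 ≤ Module.finrank K V) :
    ∃ x, x ≠ 0 ∧ B x x = 0 := by
  by_contra hcon
  have hani : ∀ x, B x x = 0 → x = 0 := fun x hx => by
    by_contra h0; exact hcon ⟨x, h0, hx⟩
  obtain ⟨π, hπ⟩ := hw.unif
  obtain ⟨e, he, H⟩ := hw.exists_four_gen hs hani hπ
  have hpow : ∀ n : ℕ, w (π ^ n) = WithZero.exp (-(n : ℤ)) := fun n => by
    rw [map_pow, hπ, ← WithZero.exp_nsmul]; simp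
  have hint : ∀ x, w (B x x) ≤ 1 → x ∈ Submodule.span K (Set.range e) := by
    intro x hx
    choose! a nx ha hnx heq using H
    let xs : ℕ → V := fun n => nx^[n] x
    have hxs : ∀ n, w (B (xs n) (xs n)) ≤ 1 := by
      intro n
      induction n with
      | zero => exact hx
      | succ n ih =>
        simp only [xs, Function.iterate_succ_apply']
        exact hnx _ ih
    let c : ℕ → Fin 4 → K := fun n i => ∑ m ∈ Finset.range n, π ^ m * a (xs m) i
    have hxc : ∀ n, x = ∑ i, c n i • e i + π ^ n • xs n := by
      intro n
      induction n with
      | zero => simp [c, xs]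
      | succ n ih =>
        have h1 := heq _ (hxs n)
        have h2 : xs (n + 1) = nx (xs n) := Function.iterate_succ_apply' _ _ _
        rw [← h2] at h1
        conv_lhs => rw [ih, h1]
        simp only [c, Finset.sum_range_succ, add_smul, Finset.sum_add_distrib, smul_add,
          Finset.smul_sum, smul_smul, pow_succ]
        abel
    have hcl : ∀ i, ∃ l, ∀ n, w (l - c n i) ≤ WithZero.exp (-(n : ℤ)) := fun i =>
      hw.complete (fun n => c n i) fun n => by
        simp only [c, Finset.sum_range_succ, add_sub_cancel_left]
        rw [map_mul, hpow]
        exact mul_le_of_le_one_right' (ha _ (hxs n) i)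
    choose l hl using hcl
    have hy : x - ∑ i, l i • e i = 0 := by
      refine hani _ (eq_zero_of_val_le (w := w) fun n => ?_)
      have hsmall : ∀ (b : K) (z : V), w b ≤ WithZero.exp (-(n : ℤ)) → w (B z z) ≤ 1 →
          w (B (b • z) (b • z)) ≤ WithZero.exp (-(n : ℤ)) := by
        intro b z hb hz
        rw [val_smul_eq]
        refine (mul_le_of_le_one_right' hz).trans ((mul_le_of_le_one_right' ?_).trans hb)
        refine hb.trans ?_
        rw [← WithZero.exp_zero, WithZero.exp_le_exp]; omega
      have e1 : x - ∑ i, l i • e i = ∑ i, (-(l i - c n i)) • e i + π ^ n • xs n := by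
        conv_lhs => rw [hxc n]
        simp only [neg_sub, sub_smul, Finset.sum_sub_distrib]
        abel
      have hb : ∀ i, w (B ((-(l i - c n i)) • e i) ((-(l i - c n i)) • e i)) ≤
          WithZero.exp (-(n : ℤ)) := fun i =>
        hsmall _ _ (by rw [Valuation.map_neg]; exact hl i n) (he i)
      rw [e1, Fin.sum_univ_four]
      have := fun {x y : V} => hw.val_add_le hs hani (x := x) (y := y)
        (g := WithZero.exp (-(n : ℤ)))
      exact this (this (this (this (hb 0) (hb 1)) (hb 2)) (hb 3))
        (hsmall _ _ (hpow n).le (hxs n))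
    rw [sub_eq_zero.1 hy]
    exact Submodule.sum_mem _ fun i _ =>
      Submodule.smul_mem _ _ (Submodule.subset_span ⟨i, rfl⟩)
  have htop : ⊤ ≤ Submodule.span K (Set.range e) := by
    intro x _
    rcases le_or_gt (w (B x x)) 1 with h | h
    · exact hint x h
    · obtain ⟨z, hz⟩ := hw.exists_val (w (B x x))⁻¹
      have h0 : w (B x x) ≠ 0 := (lt_trans zero_lt_one h).ne'
      have hz0 : z ≠ 0 := by
        rintro rfl
        rw [map_zero] at hz
        exact inv_ne_zero h0 hz.symm
      have := hint (z • x) (by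
        rw [val_smul_eq, hz, mul_assoc, inv_mul_cancel₀ h0, mul_one]
        exact inv_le_one_of_one_le₀ h.le)
      exact (Submodule.smul_mem_iff _ hz0).1 this
  have := finrank_le_of_span_eq_top (top_le_iff.1 htop)
  simp at this
  omega
end

/-! ### Quadratic spaces and their diagonalisations -/

section
open Module
variable {K : Type} [Field K] {V : Type} [AddCommGroup V] [Module K V]

/-- `(V, B)` is a quadratic space: `B` is symmetric and nondegenerate. -/
def IsQuad (B : LinearMap.BilinForm K V) : Prop :=
  (∀ x y, B x y = B y x) ∧ ∀ x, (∀ y, B x y = 0) → x = 0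

/-- `(V, B)` represents the diagonal form `⟨a 0, …, a (k - 1)⟩`. -/
def Rep (B : LinearMap.BilinForm K V) {k : ℕ} (a : Fin k → K) : Prop :=
  ∃ v : Fin k → V, ∀ i j, B (v i) (v j) = if i = j then a i else 0

/-- `(V, B)` represents every nondegenerate diagonal form of dimension `k`. -/
def DiagUniversal (B : LinearMap.BilinForm K V) (k : ℕ) : Prop :=
  ∀ a : Fin k → K, (∀ i, a i ≠ 0) → Rep B a

/-- The form induced by `B` on the orthogonal complement of `u`. -/
def cmp (B : LinearMap.BilinForm K V) (u : V) : LinearMap.BilinForm K (LinearMap.ker (B u)) :=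
  B.domRestrict₁₂ (LinearMap.ker (B u)) (LinearMap.ker (B u))

@[simp] lemma cmp_apply (B : LinearMap.BilinForm K V) (u : V) (x y : LinearMap.ker (B u)) :
    cmp B u x y = B x y := rfl

lemma finrank_cmp [FiniteDimensional K V] {B : LinearMap.BilinForm K V} {u : V} (hu : B u u ≠ 0) :
    finrank K (LinearMap.ker (B u)) + 1 = finrank K V :=
  Module.Dual.finrank_ker_add_one_of_ne_zero (f := B u) fun h => hu (by rw [h]; rfl)

lemma IsQuad.cmp {B : LinearMap.BilinForm K V} (hB : IsQuad B) {u : V} (hu : B u u ≠ 0) :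
    IsQuad (cmp B u) := by
  refine ⟨fun x y => hB.1 x y, fun x hx => Subtype.ext (hB.2 x fun y => ?_)⟩
  have hy : B u (y - (B u y / B u u) • u) = 0 := by
    rw [map_sub, map_smul, smul_eq_mul, div_mul_cancel₀ _ hu, sub_self]
  have h1 : B x (y - (B u y / B u u) • u) = 0 := hx ⟨_, hy⟩
  have h2 : B x u = 0 := by rw [hB.1]; exact x.2
  rwa [map_sub, map_smul, h2, smul_zero, sub_zero] at h1

lemma Rep.cons {B : LinearMap.BilinForm K V} (hB : IsQuad B) {u : V} {k : ℕ} {a : Fin k → K}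
    (h : Rep (Stmt0.cmp B u) a) : Rep B (Fin.cons (B u u) a : Fin (k + 1) → K) := by
  obtain ⟨v, hv⟩ := h
  refine ⟨Fin.cons u fun i => (v i : V), fun i j => ?_⟩
  refine Fin.cases ?_ (fun i => ?_) i <;> refine Fin.cases ?_ (fun j => ?_) j
  · simp
  · simp [(Fin.succ_ne_zero j).symm]
  · rw [hB.1]
    simp [Fin.succ_ne_zero i]
  · simpa using hv i j

/-- The special case of Witt's extension theorem for vectors of equal nonzero norm: the reflection
in `x - y` or minus the reflection in `x + y` maps `x` to `y`. -/
lemma IsQuad.exists_isometry (h2 : (2 : K) ≠ 0) {B : LinearMap.BilinForm K V} (hB : IsQuad B)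
    {x y : V} (hxy : B x x = B y y) (hx : B x x ≠ 0) :
    ∃ g : V → V, (∀ p q, B (g p) (g q) = B p q) ∧ g x = y := by
  have refl : ∀ z, B z z ≠ 0 → ∀ p q,
      B (p - (2 * B z p / B z z) • z) (q - (2 * B z q / B z z) • z) = B p q := by
    intro z hz p q
    simp only [map_sub, LinearMap.sub_apply, map_smul, LinearMap.smul_apply, smul_eq_mul,
      hB.1 p z]
    field_simp
    ring
  by_cases h : B (x - y) (x - y) = 0
  · have e1 : B (x - y) (x - y) = 2 * B x x - 2 * B x y := by
      simp only [map_sub, LinearMap.sub_apply, ← hxy, hB.1 y x]; ring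
    have hxx : B x y = B x x := by
      have : 2 * (B x x - B x y) = 0 := by rw [← h, e1]; ring
      rcases mul_eq_zero.1 this with h' | h'
      · exact absurd h' h2
      · exact (sub_eq_zero.1 h').symm
    have e2 : B (x + y) (x + y) = 2 * (2 * B x x) := by
      simp only [map_add, LinearMap.add_apply, ← hxy, hB.1 y x, hxx]; ring
    have hne : B (x + y) (x + y) ≠ 0 := by
      rw [e2]; exact mul_ne_zero h2 (mul_ne_zero h2 hx)
    refine ⟨fun p => -(p - (2 * B (x + y) p / B (x + y) (x + y)) • (x + y)), fun p q => ?_, ?_⟩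
    · simpa only [map_neg, LinearMap.neg_apply, neg_neg] using refl _ hne p q
    · have e3 : 2 * B (x + y) x / B (x + y) (x + y) = 1 := by
        rw [div_eq_one_iff_eq hne, e2]
        simp only [map_add, LinearMap.add_apply, hB.1 y x, hxx]; ring
      simp only [e3, one_smul]
      abel
  · refine ⟨fun p => p - (2 * B (x - y) p / B (x - y) (x - y)) • (x - y), refl _ h, ?_⟩
    have e3 : 2 * B (x - y) x / B (x - y) (x - y) = 1 := by
      rw [div_eq_one_iff_eq h]
      simp only [map_sub, LinearMap.sub_apply, hB.1 y x, ← hxy]; ring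
    simp only [e3, one_smul]
    abel

/-- Witt cancellation of a one-dimensional form. -/
lemma Rep.cancel (h2 : (2 : K) ≠ 0) {B : LinearMap.BilinForm K V} (hB : IsQuad B) {u : V} {c : K}
    (hu : B u u = c) (hc : c ≠ 0) {k : ℕ} {a : Fin k → K}
    (h : Rep B (Fin.cons c a : Fin (k + 1) → K)) : Rep (Stmt0.cmp B u) a := by
  obtain ⟨v, hv⟩ := h
  have h0 : B (v 0) (v 0) = c := by simpa using hv 0 0
  obtain ⟨g, hg, hgu⟩ := hB.exists_isometry h2 (x := v 0) (y := u) (by rw [h0, hu])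
    (by rwa [h0])
  refine ⟨fun i => ⟨g (v i.succ), ?_⟩, fun i j => ?_⟩
  · rw [LinearMap.mem_ker, ← hgu, hg, hv, if_neg (Fin.succ_ne_zero i).symm]
  · rw [cmp_apply, hg, hv]
    simp

lemma DiagUniversal.cmp (h2 : (2 : K) ≠ 0) {B : LinearMap.BilinForm K V} (hB : IsQuad B) {k : ℕ}
    (h : DiagUniversal B (k + 1)) {u : V} (hu : B u u ≠ 0) :
    DiagUniversal (Stmt0.cmp B u) k := fun _ ha =>
  Rep.cancel h2 hB rfl hu (h _ fun i => i.cases hu ha)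

lemma DiagUniversal.exists_eq {B : LinearMap.BilinForm K V} {k : ℕ}
    (h : DiagUniversal B (k + 1)) {c : K} (hc : c ≠ 0) : ∃ u, B u u = c := by
  obtain ⟨v, hv⟩ := h (fun _ => c) fun _ => hc
  exact ⟨v 0, by simpa using hv 0 0⟩

lemma IsQuad.exists_hyperbolic (h2 : (2 : K) ≠ 0) {B : LinearMap.BilinForm K V} (hB : IsQuad B)
    {x : V} (hx : x ≠ 0) (hxx : B x x = 0) : ∃ y, B y y = 0 ∧ B x y = 1 := by
  obtain ⟨y, hy⟩ : ∃ y, B x y ≠ 0 := by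
    by_contra hcon
    push Not at hcon
    exact hx (hB.2 x hcon)
  refine ⟨(B x y)⁻¹ • (y - (B y y / (2 * B x y)) • x), ?_, ?_⟩
  · simp only [map_sub, LinearMap.sub_apply, map_smul, LinearMap.smul_apply, smul_eq_mul,
      hB.1 y x, hxx]
    field_simp
    ring
  · simp only [map_sub, map_smul, smul_eq_mul, hxx]
    field_simp
    ring

lemma IsQuad.exists_eq_of_isotropic (h2 : (2 : K) ≠ 0) {B : LinearMap.BilinForm K V}
    (hB : IsQuad B) {x : V} (hx : x ≠ 0) (hxx : B x x = 0) (c : K) : ∃ z, B z z = c := by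
  obtain ⟨y, hyy, hxy⟩ := hB.exists_hyperbolic h2 hx hxx
  refine ⟨y + (c / 2) • x, ?_⟩
  simp only [map_add, LinearMap.add_apply, map_smul, LinearMap.smul_apply, smul_eq_mul,
    hB.1 y x, hxx, hyy, hxy]
  field_simp
  ring

/-- An orthogonal family of `dim V` anisotropic vectors is a basis. -/
lemma exists_basis_of_frame [FiniteDimensional K V] {B : LinearMap.BilinForm K V} {n : ℕ}
    (hn : finrank K V = n) {a : Fin n → K} (ha : ∀ i, a i ≠ 0) {v : Fin n → V}
    (hv : ∀ i j, B (v i) (v j) = if i = j then a i else 0) :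
    ∃ b : Basis (Fin n) K V, ⇑b = v := by
  have hli : LinearIndependent K v := by
    rw [Fintype.linearIndependent_iff]
    intro g hg i
    have := congrArg (B (v i)) hg
    simp only [map_sum, map_smul, hv, smul_eq_mul, map_zero, mul_ite, mul_zero, Finset.sum_ite_eq,
      Finset.mem_univ, if_true] at this
    exact (mul_eq_zero.1 this).resolve_right (ha i)
  cases n with
  | zero =>
    have : Subsingleton V := finrank_zero_iff.1 hn
    exact ⟨basisOfFinrankZero hn, funext fun i => i.elim0⟩
  | succ n =>
    exact ⟨basisOfLinearIndependentOfCardEqFinrank hli (by simp [hn]), by simp⟩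

/-- The discriminant is well defined modulo squares. -/
lemma Rep.prod_eq [FiniteDimensional K V] {B : LinearMap.BilinForm K V} {n : ℕ}
    (hn : finrank K V = n) {a b : Fin n → K} (ha : ∀ i, a i ≠ 0) (hb : ∀ i, b i ≠ 0)
    (hra : Rep B a) (hrb : Rep B b) : ∃ s, ∏ i, b i = s * s * ∏ i, a i := by
  obtain ⟨v, hv⟩ := hra
  obtain ⟨v', hv'⟩ := hrb
  obtain ⟨e, rfl⟩ := exists_basis_of_frame hn ha hv
  obtain ⟨e', rfl⟩ := exists_basis_of_frame hn hb hv'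
  have key := LinearMap.BilinForm.toMatrix_mul_basis_toMatrix e e' B
  have h1 : LinearMap.BilinForm.toMatrix e B = Matrix.diagonal a := by
    ext i j
    rw [LinearMap.BilinForm.toMatrix_apply, hv, Matrix.diagonal_apply]
  have h2 : LinearMap.BilinForm.toMatrix e' B = Matrix.diagonal b := by
    ext i j
    rw [LinearMap.BilinForm.toMatrix_apply, hv', Matrix.diagonal_apply]
  rw [h1, h2] at key
  have := congrArg Matrix.det key
  rw [Matrix.det_mul, Matrix.det_mul, Matrix.det_transpose, Matrix.det_diagonal,
    Matrix.det_diagonal] at this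
  exact ⟨(e.toMatrix e').det, by rw [← this]; ring⟩

lemma apply_self_of_frame [FiniteDimensional K V] {B : LinearMap.BilinForm K V} {n : ℕ}
    (hn : finrank K V = n) {a : Fin n → K} (ha : ∀ i, a i ≠ 0) (hra : Rep B a) (x : V) :
    ∃ c : Fin n → K, B x x = ∑ i, a i * (c i * c i) := by
  obtain ⟨v, hv⟩ := hra
  obtain ⟨e, rfl⟩ := exists_basis_of_frame hn ha hv
  refine ⟨fun i => e.repr x i, ?_⟩
  conv_lhs => rw [← e.sum_repr x]
  simp only [map_sum, LinearMap.sum_apply, map_smul, LinearMap.smul_apply, hv, smul_eq_mul,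
    mul_ite, mul_zero, Finset.sum_ite_eq', Finset.mem_univ, if_true]
  refine Finset.sum_congr rfl fun i _ => ?_
  ring

lemma IsQuad.exists_frame (h2 : (2 : K) ≠ 0) [FiniteDimensional K V] {B : LinearMap.BilinForm K V}
    (hB : IsQuad B) {n : ℕ} (hn : finrank K V = n) :
    ∃ a : Fin n → K, (∀ i, a i ≠ 0) ∧ Rep B a := by
  subst hn
  have : Invertible (2 : K) := invertibleOfNonzero h2
  obtain ⟨e, he⟩ := LinearMap.BilinForm.exists_orthogonal_basis (B := B) ⟨fun x y => hB.1 x y⟩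
  have ho : ∀ i j, i ≠ j → B (e i) (e j) = 0 := fun i j hij => he hij
  refine ⟨fun i => B (e i) (e i), fun i hi => ?_, e, fun i j => ?_⟩
  · refine e.ne_zero i (hB.2 _ fun y => ?_)
    rw [← e.sum_repr y, map_sum]
    refine Finset.sum_eq_zero fun j _ => ?_
    rw [map_smul]
    by_cases hij : i = j
    · subst hij; exact (congrArg _ hi).trans (smul_zero _)
    · rw [ho i j hij, smul_zero]
  · split_ifs with hij
    · rw [hij]
    · exact ho i j hij

/-- Since every quadratic space has an orthogonal basis, it suffices to represent diagonal
forms. -/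
lemma isKUniversal_iff (h2 : (2 : K) ≠ 0) {B : LinearMap.BilinForm K V} (hB : IsQuad B) (k : ℕ) :
    IsKUniversal K (fun x y => B x y) k ↔ DiagUniversal B k := by
  constructor
  · intro h a ha
    obtain ⟨σ, hσ⟩ := h (fun x y => ∑ i, a i * (x i * y i))
      ⟨fun x y z => by
        rw [← Finset.sum_add_distrib]
        refine Finset.sum_congr rfl fun i _ => ?_
        simp only [Pi.add_apply]; ring,
      fun c x y => by
        rw [Finset.mul_sum]
        refine Finset.sum_congr rfl fun i _ => ?_
        simp only [Pi.smul_apply, smul_eq_mul]; ring,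
      fun x y z => by
        rw [← Finset.sum_add_distrib]
        refine Finset.sum_congr rfl fun i _ => ?_
        simp only [Pi.add_apply]; ring,
      fun c x y => by
        rw [Finset.mul_sum]
        refine Finset.sum_congr rfl fun i _ => ?_
        simp only [Pi.smul_apply, smul_eq_mul]; ring⟩
      (fun x y => Finset.sum_congr rfl fun i _ => by ring)
      (fun x hx => by
        funext i
        have := hx (Pi.single i 1)
        simp only [Pi.single_apply, mul_ite, mul_one, mul_zero, Finset.sum_ite_eq',
          Finset.mem_univ, if_true] at this
        exact (mul_eq_zero.1 this).resolve_left (ha i))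
    replace hσ : ∀ x, B (σ x) (σ x) = ∑ i, a i * (x i * x i) := hσ
    have hpol : ∀ x y, B (σ x) (σ y) = ∑ i, a i * (x i * y i) := by
      intro x y
      have h1 := hσ (x + y)
      have h3 : ∑ i, a i * ((x + y) i * (x + y) i) = ∑ i, a i * (x i * x i) +
          2 * ∑ i, a i * (x i * y i) + ∑ i, a i * (y i * y i) := by
        rw [Finset.mul_sum, ← Finset.sum_add_distrib, ← Finset.sum_add_distrib]
        refine Finset.sum_congr rfl fun i _ => ?_
        simp only [Pi.add_apply]; ring
      simp only [map_add, LinearMap.add_apply] at h1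
      rw [h3, hσ x, hσ y, hB.1 (σ y) (σ x)] at h1
      refine mul_left_cancel₀ h2 ?_
      linear_combination h1
    refine ⟨fun i => σ (Pi.single i 1), fun i j => ?_⟩
    rw [hpol]
    by_cases hij : i = j
    · subst hij
      simp [Pi.single_apply]
    · simp [Pi.single_apply, hij, Ne.symm hij]
  · intro h B' hbil hsymm hnd
    let C : LinearMap.BilinForm K (Fin k → K) :=
      LinearMap.mk₂ K B' hbil.1 hbil.2.1 hbil.2.2.1 hbil.2.2.2
    have hC : IsQuad C := ⟨hsymm, hnd⟩
    have hk : finrank K (Fin k → K) = k := by simp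
    obtain ⟨a, ha, u, hu⟩ := hC.exists_frame h2 hk
    obtain ⟨e, rfl⟩ := exists_basis_of_frame hk ha hu
    obtain ⟨v, hv⟩ := h a ha
    have heq : B.compl₁₂ (e.constr K v) (e.constr K v) = C := by
      refine LinearMap.BilinForm.ext_basis e fun i j => ?_
      rw [hu, LinearMap.compl₁₂_apply, e.constr_basis, e.constr_basis, hv]
    exact ⟨e.constr K v, fun x => LinearMap.congr_fun (LinearMap.congr_fun heq x) x⟩
end

/-! ### Classification of universal spaces over a local field -/

section
open Module
open scoped WithZero
variable {K : Type} [Field K] {w : Valuation K ℤᵐ⁰} {V : Type} [AddCommGroup V] [Module K V]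

/-- A nondegenerate form in at least four variables is universal: `Q - c t ^ 2` has at least five
variables, hence is isotropic. -/
lemma IsLocal.exists_eq_of_four_le (hw : IsLocal w) (h2 : (2 : K) ≠ 0) [FiniteDimensional K V]
    {B : LinearMap.BilinForm K V} (hB : IsQuad B) (h4 : 4 ≤ finrank K V) (c : K) :
    ∃ u, B u u = c := by
  let C : LinearMap.BilinForm K (V × K) :=
    B.compl₁₂ (LinearMap.fst K V K) (LinearMap.fst K V K) -
      c • (LinearMap.mul K K).compl₁₂ (LinearMap.snd K V K) (LinearMap.snd K V K)
  have hC : ∀ x y, C x y = B x.1 y.1 - c * (x.2 * y.2) := fun x y => by simp [C]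
  obtain ⟨⟨x, t⟩, hne, h0⟩ := hw.exists_isotropic C
    (fun x y => by rw [hC, hC, hB.1, mul_comm x.2]) (by simp; omega)
  rw [hC] at h0
  simp only at h0
  by_cases ht : t = 0
  · subst ht
    have hx : x ≠ 0 := by rintro rfl; exact hne rfl
    exact hB.exists_eq_of_isotropic h2 hx (by simpa using h0) c
  · refine ⟨t⁻¹ • x, ?_⟩
    simp only [map_smul, LinearMap.smul_apply, smul_eq_mul]
    rw [sub_eq_zero.1 h0]
    field_simp

lemma IsLocal.diagUniversal_of_le (hw : IsLocal w) (h2 : (2 : K) ≠ 0) (k : ℕ) :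
    ∀ {V : Type} [AddCommGroup V] [Module K V] [FiniteDimensional K V]
      {B : LinearMap.BilinForm K V}, IsQuad B → k + 3 ≤ finrank K V → DiagUniversal B k := by
  induction k with
  | zero => exact fun _ _ a _ => ⟨fun i => i.elim0, fun i => i.elim0⟩
  | succ k ih =>
    intro V _ _ _ B hB hk a ha
    obtain ⟨u, hu⟩ := hw.exists_eq_of_four_le h2 hB (by omega) (a 0)
    have hu0 : B u u ≠ 0 := hu ▸ ha 0
    have hf := finrank_cmp hu0
    have := (ih (hB.cmp hu0) (by omega) (fun i => a i.succ) fun i => ha _).cons hB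
    rw [hu] at this
    convert this
    exact (Fin.cons_self_tail a).symm

lemma IsLocal.exists_not_isSquare (hw : IsLocal w) : ∃ π : K, π ≠ 0 ∧ ¬ IsSquare π := by
  obtain ⟨π, hπ⟩ := hw.unif
  refine ⟨π, by rintro rfl; exact WithZero.exp_ne_zero (hπ.symm.trans (map_zero w)), ?_⟩
  rintro ⟨s, rfl⟩
  have : IsSquare (WithZero.exp (-1 : ℤ)) := ⟨w s, by rw [← hπ, map_mul]⟩
  rw [isSquare_exp_iff] at this
  exact absurd this (by decide)

/-- It cannot happen that every `c ≠ 0` is, modulo squares, the discriminant of some diagonalisation: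
the discriminant is an invariant of the space, so every element would then be a square. -/
lemma IsLocal.false_of_frames (hw : IsLocal w) [FiniteDimensional K V]
    {B : LinearMap.BilinForm K V} {n : ℕ} (hn : finrank K V = n)
    (h : ∀ c : K, c ≠ 0 → ∃ a : Fin n → K, (∀ i, a i ≠ 0) ∧ Rep B a ∧
      ∃ s, s ≠ 0 ∧ ∏ i, a i = c * (s * s)) : False := by
  obtain ⟨π, hπ0, hπ⟩ := hw.exists_not_isSquare
  obtain ⟨a, ha, hra, s, hs, hsa⟩ := h 1 one_ne_zero
  obtain ⟨b, hb, hrb, t, ht, htb⟩ := h π hπ0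
  obtain ⟨r, hr⟩ := hra.prod_eq hn ha hb hrb
  rw [hsa, htb] at hr
  refine hπ ⟨r * s / t, ?_⟩
  field_simp
  linear_combination hr

/-- A universal binary form is hyperbolic: its discriminant is `-1` modulo squares, for otherwise
the form is a multiple of the norm form of a quadratic extension. -/
lemma IsLocal.isSquare_of_binary (hw : IsLocal w) (h2 : (2 : K) ≠ 0) [FiniteDimensional K V]
    {B : LinearMap.BilinForm K V} (hU : DiagUniversal B 1) (hn : finrank K V = 2) {a b : K}
    (ha : a ≠ 0) (hb : b ≠ 0) (hr : Rep B ![a, b]) : ∃ s, s ≠ 0 ∧ -(a * b) = s * s := by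
  by_cases hsq : IsSquare (-(a * b))
  · obtain ⟨s, hs⟩ := hsq
    refine ⟨s, ?_, hs⟩
    rintro rfl
    rw [mul_zero, neg_eq_zero] at hs
    exact mul_ne_zero ha hb hs
  · exfalso
    obtain ⟨c, hc, hcn⟩ := hw.exists_not_isNorm h2 hsq
    obtain ⟨u, hu⟩ := hU.exists_eq (mul_ne_zero hc ha)
    obtain ⟨x, hx⟩ := apply_self_of_frame hn (by intro i; fin_cases i <;> assumption) hr u
    rw [hu] at hx
    simp only [Fin.sum_univ_two, Matrix.cons_val, Fin.isValue] at hx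
    refine hcn ⟨x 0, x 1 / a, ?_⟩
    field_simp
    linear_combination hx

lemma isotropic_of_binary {B : LinearMap.BilinForm K V} {a b s : K}
    (ha : a ≠ 0) (hb : b ≠ 0) (hs : -(a * b) = s * s) (hr : Rep B ![a, b]) :
    ∃ x, x ≠ 0 ∧ B x x = 0 := by
  obtain ⟨v, hv⟩ := hr
  have h00 := hv 0 0
  have h01 := hv 0 1
  have h10 := hv 1 0
  have h11 := hv 1 1
  simp only [Fin.isValue, if_true, zero_ne_one, one_ne_zero, if_false, Matrix.cons_val]
    at h00 h01 h10 h11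
  refine ⟨s • v 0 + a • v 1, fun h => ?_, ?_⟩
  · have := congrArg (B (v 1)) h
    simp only [map_add, map_smul, smul_eq_mul, h10, h11, map_zero, mul_zero, zero_add] at this
    exact mul_ne_zero ha hb this
  · simp only [map_add, map_smul, LinearMap.add_apply, LinearMap.smul_apply, smul_eq_mul, h00,
      h01, h10, h11]
    linear_combination (-a) * hs

lemma fin_two_eq {R : Type} (a : Fin 2 → R) : a = ![a 0, a 1] := by
  funext i
  fin_cases i <;> rfl

/-- A universal form in at most three variables is isotropic and has two or three variables.
For three variables, splitting off minus the discriminant leaves a hyperbolic plane. -/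
lemma IsLocal.isotropic_of_diagUniversal_one (hw : IsLocal w) (h2 : (2 : K) ≠ 0)
    [FiniteDimensional K V] {B : LinearMap.BilinForm K V} (hB : IsQuad B)
    (hU : DiagUniversal B 1) (hn : finrank K V ≤ 3) :
    (∃ x, x ≠ 0 ∧ B x x = 0) ∧ (finrank K V = 2 ∨ finrank K V = 3) := by
  obtain h | h | h | h : finrank K V = 0 ∨ finrank K V = 1 ∨ finrank K V = 2 ∨ finrank K V = 3 := by
    omega
  · exfalso
    obtain ⟨u, hu⟩ := hU.exists_eq one_ne_zero
    have : Subsingleton V := finrank_zero_iff.1 h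
    rw [Subsingleton.elim u 0] at hu
    simp at hu
  · exfalso
    refine hw.false_of_frames h (B := B) fun c hc => ⟨fun _ => c, fun _ => hc, hU _ fun _ => hc, 1,
      one_ne_zero, by simp⟩
  · refine ⟨?_, Or.inl h⟩
    obtain ⟨a, ha, hr⟩ := hB.exists_frame h2 h
    rw [fin_two_eq a] at hr
    obtain ⟨s, -, hs⟩ := hw.isSquare_of_binary h2 hU h (ha 0) (ha 1) hr
    exact isotropic_of_binary (ha 0) (ha 1) hs hr
  · refine ⟨?_, Or.inr h⟩
    obtain ⟨a, ha, hr⟩ := hB.exists_frame h2 h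
    have hD : ∏ i, a i ≠ 0 := Finset.prod_ne_zero_iff.2 fun i _ => ha i
    obtain ⟨u, hu⟩ := hU.exists_eq (neg_ne_zero.2 hD)
    have hu0 : B u u ≠ 0 := hu ▸ neg_ne_zero.2 hD
    have hf := finrank_cmp hu0
    obtain ⟨b, hb, hrb⟩ := (hB.cmp hu0).exists_frame h2 (n := 2) (by omega)
    obtain ⟨s, hs⟩ := hr.prod_eq h ha (fun i => by
      refine i.cases ?_ ?_
      · exact hu0
      · exact hb) (hrb.cons hB)
    rw [Fin.prod_univ_succ, Fin.prod_univ_two] at hs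
    simp only [Fin.cons_zero, Fin.cons_succ, hu] at hs
    rw [fin_two_eq b] at hrb
    obtain ⟨x, hx, hxx⟩ := isotropic_of_binary (hb 0) (hb 1) (s := s) (by
      refine mul_left_cancel₀ hD ?_
      linear_combination hs) hrb
    exact ⟨x, fun h => hx (Subtype.ext h), hxx⟩

/-- An isotropic space contains a hyperbolic plane, diagonalised as `⟨1, -1⟩`. -/
lemma IsQuad.rep_one_neg_one (h2 : (2 : K) ≠ 0) {B : LinearMap.BilinForm K V} (hB : IsQuad B)
    {x : V} (hx : x ≠ 0) (hxx : B x x = 0) : Rep B ![1, -1] := by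
  obtain ⟨y, hyy, hxy⟩ := hB.exists_hyperbolic h2 hx hxx
  refine ⟨![(2 : K)⁻¹ • x + y, (2 : K)⁻¹ • x - y], fun i j => ?_⟩
  fin_cases i <;> fin_cases j <;>
    simp only [Fin.zero_eta, Fin.mk_one, Fin.isValue, Matrix.cons_val, map_add, map_sub, map_smul,
      LinearMap.add_apply, LinearMap.sub_apply, LinearMap.smul_apply, smul_eq_mul, hxx, hyy, hxy,
      hB.1 y x, if_true, zero_ne_one, one_ne_zero, if_false]
  all_goals field_simp
  all_goals ring

/-- A `2`-universal space of dimension at most four is the sum of two hyperbolic planes.  Splitting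
off vectors of arbitrary norm `c` leaves isotropic ternary spaces, so that `⟨1, -1, c⟩` is always
represented; hence the complement of `⟨1, -1⟩` is a universal binary form. -/
lemma IsLocal.rep_of_diagUniversal_two (hw : IsLocal w) (h2 : (2 : K) ≠ 0)
    [FiniteDimensional K V] {B : LinearMap.BilinForm K V} (hB : IsQuad B)
    (hU : DiagUniversal B 2) (hn : finrank K V ≤ 4) :
    finrank K V = 4 ∧ ∃ a b s : K, a ≠ 0 ∧ b ≠ 0 ∧ s ≠ 0 ∧ -(a * b) = s * s ∧
      Rep B ![1, -1, a, b] := by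
  have hcmp : ∀ {u : V}, B u u ≠ 0 → (∃ x, x ≠ 0 ∧ cmp B u x x = 0) ∧
      (finrank K V = 3 ∨ finrank K V = 4) := fun {u} hu => by
    have hf := finrank_cmp hu
    obtain ⟨h1, h3⟩ := hw.isotropic_of_diagUniversal_one h2 (hB.cmp hu) (hU.cmp h2 hB hu)
      (by omega)
    exact ⟨h1, by omega⟩
  obtain ⟨u, hu⟩ := hU.exists_eq one_ne_zero
  obtain h | h := (hcmp (u := u) (by rw [hu]; exact one_ne_zero)).2
  · exfalso
    refine hw.false_of_frames h (B := B) fun c hc => ?_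
    obtain ⟨u, hu⟩ := hU.exists_eq (neg_ne_zero.2 hc)
    have hu0 : B u u ≠ 0 := hu ▸ neg_ne_zero.2 hc
    have hf := finrank_cmp hu0
    have hf2 : finrank K (LinearMap.ker (B u)) = 2 := by omega
    obtain ⟨b, hb, hrb⟩ := (hB.cmp hu0).exists_frame h2 hf2
    have hrb' := hrb
    rw [fin_two_eq b] at hrb'
    obtain ⟨s, hs0, hs⟩ := hw.isSquare_of_binary h2 (hU.cmp h2 hB hu0) hf2 (hb 0) (hb 1) hrb'
    refine ⟨_, fun i => ?_, hrb.cons hB, s, hs0, ?_⟩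
    · refine i.cases ?_ ?_
      · exact hu0
      · exact hb
    · rw [Fin.prod_univ_succ, Fin.prod_univ_two]
      simp only [Fin.cons_zero, Fin.cons_succ, hu]
      linear_combination c * hs
  · refine ⟨h, ?_⟩
    have h3 : ∀ c : K, c ≠ 0 → Rep B ![1, -1, c] := fun c hc => by
      obtain ⟨u, hu⟩ := hU.exists_eq hc
      have hu0 : B u u ≠ 0 := hu ▸ hc
      obtain ⟨x, hx, hxx⟩ := (hcmp hu0).1
      have hr := ((hB.cmp hu0).rep_one_neg_one h2 hx hxx).cons hB
      rw [hu] at hr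
      obtain ⟨v, hv⟩ := hr
      refine ⟨![v 1, v 2, v 0], fun i j => ?_⟩
      fin_cases i <;> fin_cases j <;> simp [hv]
    have hm1 : (-1 : K) ≠ 0 := neg_ne_zero.2 one_ne_zero
    have hu0 : B u u ≠ 0 := hu ▸ one_ne_zero
    have hf := finrank_cmp hu0
    have hB' := hB.cmp hu0
    obtain ⟨u', hu'⟩ := (hU.cmp h2 hB hu0).exists_eq hm1
    have hu0' : cmp B u u' u' ≠ 0 := hu' ▸ hm1
    have hf' := finrank_cmp hu0'
    have hf2 : finrank K (LinearMap.ker (cmp B u u')) = 2 := by omega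
    have hU' : DiagUniversal (cmp (cmp B u) u') 1 := fun a ha => by
      have h4 : Rep B (Fin.cons 1 (Fin.cons (-1) a) : Fin 3 → K) := by
        convert h3 (a 0) (ha 0)
        funext i
        fin_cases i <;> rfl
      exact (h4.cancel h2 hB hu one_ne_zero).cancel h2 hB' hu' hm1
    obtain ⟨b, hb, hrb⟩ := (hB'.cmp hu0').exists_frame h2 hf2
    rw [fin_two_eq b] at hrb
    obtain ⟨s, hs0, hs⟩ := hw.isSquare_of_binary h2 hU' hf2 (hb 0) (hb 1) hrb
    have hr := (hrb.cons hB').cons hB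
    rw [hu, hu'] at hr
    exact ⟨b 0, b 1, s, hb 0, hb 1, hs0, hs, hr⟩

/-- Splitting off `⟨c⟩` from a `3`-universal space of dimension at most five would leave a sum of
two hyperbolic planes for every `c`, so that the discriminant would take every value. -/
lemma IsLocal.not_diagUniversal_three (hw : IsLocal w) (h2 : (2 : K) ≠ 0)
    [FiniteDimensional K V] {B : LinearMap.BilinForm K V} (hB : IsQuad B)
    (hU : DiagUniversal B 3) (hn : finrank K V ≤ 5) : False := by
  have key : ∀ c : K, c ≠ 0 → finrank K V = 5 ∧ ∃ a : Fin 5 → K, (∀ i, a i ≠ 0) ∧ Rep B a ∧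
      ∃ s, s ≠ 0 ∧ ∏ i, a i = c * (s * s) := fun c hc => by
    obtain ⟨u, hu⟩ := hU.exists_eq hc
    have hu0 : B u u ≠ 0 := hu ▸ hc
    have hf := finrank_cmp hu0
    obtain ⟨h4, a, b, s, ha, hb, hs0, hs, hr⟩ := hw.rep_of_diagUniversal_two h2 (hB.cmp hu0)
      (hU.cmp h2 hB hu0) (by omega)
    refine ⟨by omega, _, fun i => ?_, hr.cons hB, s, hs0, ?_⟩
    · refine i.cases ?_ fun i => ?_
      · exact hu0
      · fin_cases i
        exacts [one_ne_zero, neg_ne_zero.2 one_ne_zero, ha, hb]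
    · rw [Fin.prod_univ_succ, Fin.prod_univ_four]
      simp only [Fin.cons_zero, Fin.cons_succ, hu, Matrix.cons_val, Fin.isValue]
      linear_combination c * hs
  exact hw.false_of_frames (key 1 one_ne_zero).1 fun c hc => (key c hc).2

lemma IsLocal.le_finrank (hw : IsLocal w) (h2 : (2 : K) ≠ 0) (k : ℕ) :
    ∀ {V : Type} [AddCommGroup V] [Module K V] [FiniteDimensional K V]
      {B : LinearMap.BilinForm K V}, IsQuad B → DiagUniversal B (k + 3) →
      k + 6 ≤ finrank K V := by
  induction k with
  | zero =>
    intro V _ _ _ B hB hU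
    by_contra hcon
    exact hw.not_diagUniversal_three h2 hB hU (by omega)
  | succ k ih =>
    intro V _ _ _ B hB hU
    obtain ⟨u, hu⟩ := DiagUniversal.exists_eq (k := k + 3) hU one_ne_zero
    have hu0 : B u u ≠ 0 := hu ▸ one_ne_zero
    have hf := finrank_cmp hu0
    have := ih (hB.cmp hu0) (DiagUniversal.cmp (k := k + 3) h2 hB hU hu0)
    omega

lemma exists_hyperbolic_basis (h2 : (2 : K) ≠ 0) [FiniteDimensional K V]
    {B : LinearMap.BilinForm K V} (hn : finrank K V = 4)
    {a b s : K} (ha : a ≠ 0) (hs0 : s ≠ 0) (hs : -(a * b) = s * s)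
    (hr : Rep B ![1, -1, a, b]) :
    ∃ x₁ y₁ x₂ y₂ : V,
          Submodule.span K {x₁, y₁, x₂, y₂} = ⊤ ∧
          B x₁ x₁ = 0 ∧ B y₁ y₁ = 0 ∧ B x₁ y₁ = 1 ∧
          B x₂ x₂ = 0 ∧ B y₂ y₂ = 0 ∧ B x₂ y₂ = 1 ∧
          B x₁ x₂ = 0 ∧ B x₁ y₂ = 0 ∧ B y₁ x₂ = 0 ∧ B y₁ y₂ = 0 := by
  have hb : b ≠ 0 := by
    rintro rfl
    rw [mul_zero, neg_zero] at hs
    exact mul_ne_zero hs0 hs0 hs.symm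
  obtain ⟨v, hv⟩ := hr
  obtain ⟨e, rfl⟩ := exists_basis_of_frame hn (by
    intro i; fin_cases i
    exacts [one_ne_zero, neg_ne_zero.2 one_ne_zero, ha, hb]) hv
  have htop := e.span_eq
  have hvv : ∀ i j, B (e i) (e j) = if i = j then ![1, -1, a, b] i else 0 := hv
  -- the two null lines of the plane `⟨a, b⟩` are spanned by `s e₂ ± a e₃`
  refine ⟨e 0 + e 1, (2 : K)⁻¹ • (e 0 - e 1), s • e 2 + a • e 3,
    (2 * a * (s * s))⁻¹ • (s • e 2 - a • e 3), ?_, ?_⟩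
  · set S := Submodule.span K {e 0 + e 1, (2 : K)⁻¹ • (e 0 - e 1), s • e 2 + a • e 3,
      (2 * a * (s * s))⁻¹ • (s • e 2 - a • e 3)} with hS
    have m1 : e 0 + e 1 ∈ S := Submodule.subset_span (by simp)
    have m2 : (2 : K)⁻¹ • (e 0 - e 1) ∈ S := Submodule.subset_span (by simp)
    have m3 : s • e 2 + a • e 3 ∈ S := Submodule.subset_span (by simp)
    have m4 : (2 * a * (s * s))⁻¹ • (s • e 2 - a • e 3) ∈ S := Submodule.subset_span (by simp)
    rw [Submodule.smul_mem_iff _ (inv_ne_zero h2)] at m2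
    rw [Submodule.smul_mem_iff _
      (inv_ne_zero (mul_ne_zero (mul_ne_zero h2 ha) (mul_ne_zero hs0 hs0)))] at m4
    have p0 : e 0 ∈ S := by
      rw [← Submodule.smul_mem_iff _ h2]
      convert S.add_mem m1 m2 using 1
      module
    have p1 : e 1 ∈ S := by
      convert S.sub_mem m1 p0 using 1
      abel
    have p2 : e 2 ∈ S := by
      rw [← Submodule.smul_mem_iff _ (mul_ne_zero h2 hs0)]
      convert S.add_mem m3 m4 using 1
      module
    have p3 : e 3 ∈ S := by
      rw [← Submodule.smul_mem_iff _ ha]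
      convert S.sub_mem m3 (S.smul_mem s p2) using 1
      abel
    rw [eq_top_iff, ← htop, Submodule.span_le]
    rintro _ ⟨i, rfl⟩
    fin_cases i
    exacts [p0, p1, p2, p3]
  · simp only [map_add, map_sub, map_smul, LinearMap.add_apply, LinearMap.sub_apply,
      LinearMap.smul_apply, smul_eq_mul, hvv]
    simp only [Fin.isValue, Fin.reduceEq, if_true, if_false, Matrix.cons_val]
    refine ⟨by ring, by ring, ?_, ?_, ?_, ?_, by ring, by ring, by ring, by ring⟩
    · field_simp; ring
    · linear_combination (-a) * hs
    · field_simp; linear_combination (-1) * hs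
    · field_simp; linear_combination hs

/-- The classification, over any nonarchimedean local field of characteristic not two. -/
theorem IsLocal.diagUniversal_iff (hw : IsLocal w) (h2 : (2 : K) ≠ 0) [FiniteDimensional K V]
    {B : LinearMap.BilinForm K V} (hB : IsQuad B) {k : ℕ} (hk : 1 ≤ k) :
    DiagUniversal B k ↔
      (k + 3 ≤ finrank K V) ∨
      (k = 1 ∧ (∃ x : V, x ≠ 0 ∧ B x x = 0) ∧ (finrank K V = 2 ∨ finrank K V = 3)) ∨
      (k = 2 ∧ finrank K V = 4 ∧
        ∃ x₁ y₁ x₂ y₂ : V,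
          Submodule.span K {x₁, y₁, x₂, y₂} = ⊤ ∧
          B x₁ x₁ = 0 ∧ B y₁ y₁ = 0 ∧ B x₁ y₁ = 1 ∧
          B x₂ x₂ = 0 ∧ B y₂ y₂ = 0 ∧ B x₂ y₂ = 1 ∧
          B x₁ x₂ = 0 ∧ B x₁ y₂ = 0 ∧ B y₁ x₂ = 0 ∧ B y₁ y₂ = 0) := by
  constructor
  · intro hU
    by_cases hle : k + 3 ≤ finrank K V
    · exact Or.inl hle
    right
    obtain rfl | rfl | ⟨m, rfl⟩ : k = 1 ∨ k = 2 ∨ ∃ m, k = m + 3 := by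
      rcases lt_or_ge k 3 with h | h
      · omega
      · exact Or.inr (Or.inr ⟨k - 3, by omega⟩)
    · exact Or.inl ⟨rfl, hw.isotropic_of_diagUniversal_one h2 hB hU (by omega)⟩
    · obtain ⟨h4, a, b, s, ha, -, hs0, hs, hr⟩ := hw.rep_of_diagUniversal_two h2 hB hU (by omega)
      exact Or.inr ⟨rfl, h4, exists_hyperbolic_basis h2 h4 ha hs0 hs hr⟩
    · have := hw.le_finrank h2 m hB hU
      omega
  · rintro (h | ⟨rfl, ⟨x, hx, hxx⟩, -⟩ | ⟨rfl, -, x₁, y₁, x₂, y₂, -, h⟩)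
    · exact hw.diagUniversal_of_le h2 k hB h
    · intro a _
      obtain ⟨z, hz⟩ := hB.exists_eq_of_isotropic h2 hx hxx (a 0)
      refine ⟨fun _ => z, fun i j => ?_⟩
      rw [Subsingleton.elim i 0, Subsingleton.elim j 0, if_pos rfl, hz]
    · intro a _
      obtain ⟨h1, h3, h4, h5, h6, h7, h8, h9, h10, h11⟩ := h
      refine ⟨![x₁ + (a 0 / 2) • y₁, x₂ + (a 1 / 2) • y₂], fun i j => ?_⟩
      fin_cases i <;> fin_cases j <;>
        simp only [Fin.zero_eta, Fin.mk_one, Fin.isValue, Matrix.cons_val, map_add, map_smul,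
          LinearMap.add_apply, LinearMap.smul_apply, smul_eq_mul, hB.1 y₁ x₁, hB.1 y₂ x₂,
          hB.1 x₂ x₁, hB.1 x₂ y₁, hB.1 y₂ x₁, hB.1 y₂ y₁, h1, h3, h4, h5, h6, h7, h8, h9, h10,
          h11, if_true, zero_ne_one, one_ne_zero, if_false]
      all_goals field_simp
      all_goals ring
end

theorem kUniversal_space_iff_of_nonarchimedean
    (F : Type) [Field F] [NumberField F] (v : HeightOneSpectrum (𝓞 F))
    (k : ℕ) (hk : 1 ≤ k)
    (V : Type) [AddCommGroup V] [Module (v.adicCompletion F) V]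
    [FiniteDimensional (v.adicCompletion F) V]
    (B : V → V → v.adicCompletion F)
    (hbil : IsBilinear (v.adicCompletion F) B)
    (hsymm : ∀ x y, B x y = B y x)
    (hnondeg : ∀ x, (∀ y, B x y = 0) → x = 0) :
    IsKUniversal (v.adicCompletion F) B k ↔
      (k + 3 ≤ Module.finrank (v.adicCompletion F) V) ∨
      (k = 1 ∧ (∃ x : V, x ≠ 0 ∧ B x x = 0) ∧
        (Module.finrank (v.adicCompletion F) V = 2 ∨
          Module.finrank (v.adicCompletion F) V = 3)) ∨
      (k = 2 ∧ Module.finrank (v.adicCompletion F) V = 4 ∧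
        ∃ x₁ y₁ x₂ y₂ : V,
          Submodule.span (v.adicCompletion F) {x₁, y₁, x₂, y₂} = ⊤ ∧
          B x₁ x₁ = 0 ∧ B y₁ y₁ = 0 ∧ B x₁ y₁ = 1 ∧
          B x₂ x₂ = 0 ∧ B y₂ y₂ = 0 ∧ B x₂ y₂ = 1 ∧
          B x₁ x₂ = 0 ∧ B x₁ y₂ = 0 ∧ B y₁ x₂ = 0 ∧ B y₁ y₂ = 0) := by
  let C : LinearMap.BilinForm (v.adicCompletion F) V :=
    LinearMap.mk₂ _ B hbil.1 hbil.2.1 hbil.2.2.1 hbil.2.2.2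
  have hC : IsQuad C := ⟨hsymm, hnondeg⟩
  have h2 := adic_two_ne_zero F v
  exact (isKUniversal_iff h2 hC k).trans ((adic_isLocal F v).diagUniversal_iff h2 hC hk)

end Stmt0
end

section
/- Let p be a dyadic finite prime of a number field F, set e = ord_p(2), let π_p be a uniformizer, and let ρ_p ∈ O_p^× be such that Δ_p = 1 − 4ρ_p is a unit with F_p(√Δ_p)/F_p unramified. Then for every odd integer t with 1 ≤ t ≤ 2e−1 and every unit σ ∈ O_p^×, the Hilbert symbol satisfies (1 − σπ_p^t , 1 − 4ρ_p σ^{-1} π_p^{-t})_p = −1. -/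
/-!
Write `K` for the completion, `a = σ π ^ t`, `u = 1 - a`, `Δ = 1 - 4ρ` and `w = a - 4ρ`, so that
`u + w = Δ`; the coefficients of the form are `u` and `w / a`.

In terms of symbols, `(u, w / a) = (u, w)` because `(1 - a, a) = 1`, and `u + w = Δ` gives
`(u, w) = (Δ, Δ * u * w)`. Since `K(√Δ)/K` is unramified this is `(-1) ^ ord (u * w)`, and
`ord (u * w) = ord w = t` is odd, because `t < 2e = ord 4`.

The proof makes these steps explicit. A zero `(x, y, z)` of the form gives `Z ^ 2 = u X ^ 2 + w y ^ 2`
with `Z = z + u x`, `X = z + x`; then `P = u X + w y` and `Q = X - y` satisfy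
`P ^ 2 - Δ Z ^ 2 = - u w Q ^ 2`. The right side has odd order unless `Q = 0`, whereas nonzero values
of the norm form `P ^ 2 - Δ Z ^ 2` have even order (`exists_valuation_sq_sub_eq_sq`). The latter is
completion of the square together with Hensel's lemma for `r ^ 2 + r + ρ`
(`exists_quadratic_root`), which is where the non-squareness of `Δ` enters.
-/

open IsDedekindDomain HeightOneSpectrum NumberField

namespace Stmt9

open scoped WithZero
open Filter Topology

/-- Hensel's lemma for a quadratic polynomial `s ^ 2 + d s + c` with `d` a unit and `c` in the
maximal ideal: the root is the limit of the iteration `s ↦ -(c + s ^ 2) / d`, which is a contraction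
on the ball of radius `v c`. -/
lemma exists_quadratic_root {K : Type*} [Field K] [Valued K ℤᵐ⁰] [CompleteSpace K]
    (c d : K) (hc : Valued.v c < 1) (hd : Valued.v d = 1) :
    ∃ s : K, s ^ 2 + d * s + c = 0 := by
  have hd0 : d ≠ 0 := by
    rintro rfl
    simp at hd
  let f : K → K := fun s ↦ -(c + s ^ 2) / d
  let s : ℕ → K := fun n ↦ f^[n] 0
  have hs0 : s 0 = 0 := rfl
  have hs (n : ℕ) : s (n + 1) = -(c + s n ^ 2) / d := by
    simp only [s, Function.iterate_succ_apply', f]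
  have hb (n : ℕ) : Valued.v (s n) ≤ Valued.v c := by
    induction n with
    | zero => simp [hs0]
    | succ n ih =>
      rw [hs, map_div₀, hd, div_one, Valuation.map_neg]
      refine Valuation.map_add_le _ le_rfl ?_
      rw [map_pow, sq]
      exact (mul_le_mul' ih (ih.trans hc.le)).trans (mul_one _).le
  have hcau (n k : ℕ) : Valued.v (s (n + k) - s n) ≤ Valued.v c ^ (n + 1) := by
    induction n with
    | zero => simpa [hs0] using hb k
    | succ n ih =>
      have h : s (n + 1 + k) - s (n + 1) = -((s (n + k) - s n) * (s (n + k) + s n)) / d := by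
        rw [show n + 1 + k = n + k + 1 by ring, hs, hs]
        field_simp
        ring
      rw [h, map_div₀, hd, div_one, Valuation.map_neg, map_mul, pow_succ]
      exact mul_le_mul' ih (Valuation.map_add_le _ (hb _) (hb _))
  have hC : CauchySeq s := by
    rw [(Valued.hasBasis_uniformity K ℤᵐ⁰).cauchySeq_iff']
    intro γ _
    obtain ⟨N, hN⟩ := exists_pow_lt₀ hc
      (Units.map (MonoidWithZeroHom.ValueGroup₀.embedding
        (f := (.ofClass (Valued.v : Valuation K ℤᵐ⁰)))) γ)
    refine ⟨N, fun n hn ↦ ?_⟩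
    obtain ⟨k, rfl⟩ := Nat.exists_eq_add_of_le hn
    simp only [Set.mem_ofPred_eq]
    rw [Valuation.restrict_lt_iff_lt_embedding, Valuation.map_sub_swap]
    refine (hcau N k).trans_lt (lt_of_le_of_lt ?_ hN)
    exact pow_le_pow_right_of_le_one' hc.le N.le_succ
  obtain ⟨L, hL⟩ := cauchySeq_tendsto_of_complete hC
  refine ⟨L, ?_⟩
  have h1 : Tendsto (fun n ↦ s (n + 1)) atTop (𝓝 L) := (tendsto_add_atTop_iff_nat 1).2 hL
  have h2 : Tendsto (fun n ↦ s (n + 1)) atTop (𝓝 (-(c + L ^ 2) / d)) := by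
    simp only [hs]
    exact ((hL.pow 2).const_add c).neg.div_const d
  have h3 := tendsto_nhds_unique h1 h2
  rw [eq_div_iff hd0] at h3
  linear_combination h3

/-- Let `2` be a nonzero nonunit and `ρ` integral. If `1 - 4ρ` is not a square, then
`P ^ 2 - (1 - 4ρ)`, the norm of `P + √(1 - 4ρ)`, has even order. -/
lemma exists_valuation_sq_sub_eq_sq {K : Type*} [Field K] [Valued K ℤᵐ⁰] [CompleteSpace K]
    (h2 : Valued.v (2 : K) < 1) (h20 : (2 : K) ≠ 0) (ρ : K) (hρ : Valued.v ρ ≤ 1)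
    (hns : ¬ ∃ x : K, x ^ 2 = 1 - 4 * ρ) (P : K) :
    ∃ g : ℤᵐ⁰, g ≠ 0 ∧ Valued.v (P ^ 2 - (1 - 4 * ρ)) = g ^ 2 := by
  have h20' : Valued.v (2 : K) ≠ 0 := by simpa using h20
  rcases lt_or_ge (Valued.v (2 : K)) (Valued.v (P - 1)) with h | h
  · have hpos : (0 : ℤᵐ⁰) < Valued.v (P - 1) := lt_of_le_of_lt zero_le h
    refine ⟨Valued.v (P - 1), hpos.ne', ?_⟩
    rw [show P ^ 2 - (1 - 4 * ρ) = (P - 1) ^ 2 + (2 * (P - 1) + 2 * 2 * ρ) by ring, ← map_pow]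
    refine Valuation.map_add_eq_of_lt_left _ (Valuation.map_add_lt _ ?_ ?_)
    · rw [map_mul, map_pow, sq]
      exact mul_lt_mul_of_pos_right h hpos
    · rw [map_mul, map_mul, map_pow, sq]
      calc _ ≤ Valued.v (2 : K) * Valued.v (2 : K) * 1 := mul_le_mul' le_rfl hρ
        _ = Valued.v (2 : K) * Valued.v (2 : K) := mul_one _
        _ < _ := mul_lt_mul'' h h zero_le zero_le
  · obtain ⟨r, hr⟩ : ∃ r : K, P = 1 + 2 * r := ⟨(P - 1) / 2, by field_simp; ring⟩
    subst hr
    have hr : Valued.v r ≤ 1 := by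
      rw [add_sub_cancel_left, map_mul] at h
      by_contra! hlt
      have := mul_lt_mul_of_pos_left hlt (zero_lt_iff.2 h20')
      rw [mul_one] at this
      exact absurd h this.not_ge
    refine ⟨Valued.v (2 : K), h20', ?_⟩
    rw [show (1 + 2 * r) ^ 2 - (1 - 4 * ρ) = 2 ^ 2 * (r ^ 2 + r + ρ) by ring, map_mul, map_pow]
    suffices Valued.v (r ^ 2 + r + ρ) = 1 by rw [this, mul_one]
    refine le_antisymm ?_ ?_
    · refine Valuation.map_add_le _ (Valuation.map_add_le _ ?_ hr) hρ
      rw [map_pow]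
      exact pow_le_one' hr 2
    · by_contra! hlt
      -- here `r` lifts to a root of `X ^ 2 + X + ρ`, whose discriminant is `1 - 4ρ`
      have hd : Valued.v (1 + 2 * r) = 1 := by
        rw [← map_one (Valued.v : Valuation K ℤᵐ⁰)]
        refine Valuation.map_add_eq_of_lt_left _ ?_
        rw [map_mul, map_one]
        exact (mul_le_mul' le_rfl hr).trans_lt (by simpa using h2)
      obtain ⟨s, hs⟩ := exists_quadratic_root _ _ hlt hd
      exact hns ⟨2 * (r + s) + 1, by linear_combination 4 * hs⟩

/-- A nontrivial zero of `u x ^ 2 + b y ^ 2 - z ^ 2` yields a nontrivial zero of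
`P ^ 2 - Δ Z ^ 2 + u w Q ^ 2`, where `u = 1 - a`, `w = a b`, `Δ = u + w`. -/
lemma exists_norm_form_zero {K : Type*} [Field K] {a b x y z : K} (ha : a ≠ 0)
    (hΔ : 1 - a + a * b ≠ 0)
    (hne : x ≠ 0 ∨ y ≠ 0 ∨ z ≠ 0) (h : z ^ 2 = (1 - a) * x ^ 2 + b * y ^ 2) :
    ∃ P Z Q : K, (P ≠ 0 ∨ Z ≠ 0 ∨ Q ≠ 0) ∧
      P ^ 2 - (1 - a + a * b) * Z ^ 2 = -((1 - a) * (a * b)) * Q ^ 2 := by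
  refine ⟨(1 - a) * (z + x) + a * b * y, z + (1 - a) * x, z + x - y, ?_, ?_⟩
  · by_contra! h0
    obtain ⟨hP, hZ, hQ⟩ := h0
    have hy : y = 0 := by
      have : (1 - a + a * b) * y = 0 := by linear_combination hP - (1 - a) * hQ
      simpa [hΔ] using this
    have hx : x = 0 := by
      have : a * x = 0 := by linear_combination hQ - hZ + hy
      simpa [ha] using this
    have hz : z = 0 := by linear_combination hQ - hx + hy
    simp [hx, hy, hz] at hne
  · linear_combination -(1 - a + a * b) * a * h

theorem hilbert_symbol_neg_one
    (F : Type) [Field F] [NumberField F] (v : HeightOneSpectrum (𝓞 F))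
    (hdyadic : (2 : 𝓞 F) ∈ v.asIdeal)
    (e : ℕ)
    (he : Valued.v (2 : v.adicCompletion F) =
      (Multiplicative.ofAdd (-(e : ℤ)) : Multiplicative ℤ))
    (π : v.adicCompletion F)
    (hπ : Valued.v π = (Multiplicative.ofAdd (-1 : ℤ) : Multiplicative ℤ))
    (ρ : v.adicCompletion F)
    (hρ : Valued.v ρ = 1)
    (hΔns : ¬ ∃ x : v.adicCompletion F, x ^ 2 = 1 - 4 * ρ)
    (t : ℕ) (htodd : Odd t) (ht1 : 1 ≤ t) (ht2 : t ≤ 2 * e - 1)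
    (σ : v.adicCompletion F) (hσ : Valued.v σ = 1) :
    ¬ ∃ x y z : v.adicCompletion F, (x ≠ 0 ∨ y ≠ 0 ∨ z ≠ 0) ∧
      z ^ 2 = (1 - σ * π ^ t) * x ^ 2 + (1 - 4 * ρ * σ⁻¹ * π⁻¹ ^ t) * y ^ 2 := by
  rintro ⟨x, y, z, hne, h⟩
  have hv0 : ∀ {k : v.adicCompletion F}, Valued.v k ≠ 0 → k ≠ 0 := fun {k} hk ↦ by
    rintro rfl
    simp at hk
  have hσ0 : σ ≠ 0 := hv0 (by simp [hσ])
  have hπ0 : π ≠ 0 := hv0 (by simp [hπ])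
  have h20 : (2 : v.adicCompletion F) ≠ 0 := hv0 (by simp [he])
  have he1 : 1 ≤ e := by omega
  have hexp (n : ℤ) : ((Multiplicative.ofAdd n : Multiplicative ℤ) : ℤᵐ⁰) = WithZero.exp n := rfl
  rw [hexp] at he hπ
  have h2 : Valued.v (2 : v.adicCompletion F) < 1 := by
    rw [he, ← WithZero.exp_zero, WithZero.exp_lt_exp]
    omega
  have ha : Valued.v (σ * π ^ t) = WithZero.exp (-(t : ℤ)) := by
    rw [map_mul, hσ, one_mul, map_pow, hπ, ← WithZero.exp_nsmul]
    simp
  have ha0 : σ * π ^ t ≠ 0 := mul_ne_zero hσ0 (pow_ne_zero _ hπ0)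
  have hab : σ * π ^ t * (1 - 4 * ρ * σ⁻¹ * π⁻¹ ^ t) = σ * π ^ t - 4 * ρ := by
    rw [inv_pow]
    field_simp
  have hΔ : 1 - σ * π ^ t + σ * π ^ t * (1 - 4 * ρ * σ⁻¹ * π⁻¹ ^ t) = 1 - 4 * ρ := by
    rw [hab]
    ring
  have hΔ0 : 1 - 4 * ρ ≠ 0 := fun h0 ↦ hΔns ⟨0, by simp [h0]⟩
  obtain ⟨P, Z, Q, hPZQ, hE⟩ := exists_norm_form_zero ha0 (by rwa [hΔ]) hne h
  rw [hΔ, hab] at hE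
  have hu : Valued.v (1 - σ * π ^ t) = 1 := by
    rw [← map_one (Valued.v : Valuation (v.adicCompletion F) ℤᵐ⁰)]
    refine Valuation.map_sub_eq_of_lt_left _ ?_
    rw [ha, map_one, ← WithZero.exp_zero, WithZero.exp_lt_exp]
    omega
  have hw : Valued.v (σ * π ^ t - 4 * ρ) = WithZero.exp (-(t : ℤ)) := by
    rw [← ha]
    refine Valuation.map_sub_eq_of_lt_left _ ?_
    rw [ha, show (4 : v.adicCompletion F) = 2 * 2 by norm_num, map_mul, map_mul, hρ, he, mul_one,
      ← WithZero.exp_add, WithZero.exp_lt_exp]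
    omega
  have hR : Valued.v (-((1 - σ * π ^ t) * (σ * π ^ t - 4 * ρ)) * Q ^ 2) =
      WithZero.exp (-(t : ℤ)) * Valued.v Q ^ 2 := by
    rw [map_mul, Valuation.map_neg, map_mul, hu, hw, one_mul, map_pow]
  by_cases hPZ : P = 0 ∧ Z = 0
  · obtain ⟨rfl, rfl⟩ := hPZ
    have hQ : Q ≠ 0 := by simpa using hPZQ
    rw [← hE] at hR
    simp [hQ] at hR
  · obtain ⟨g, hg0, hg⟩ : ∃ g : ℤᵐ⁰, g ≠ 0 ∧
        Valued.v (P ^ 2 - (1 - 4 * ρ) * Z ^ 2) = g ^ 2 := by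
      by_cases hZ : Z = 0
      · have hP : P ≠ 0 := fun hP ↦ hPZ ⟨hP, hZ⟩
        exact ⟨Valued.v P, by simpa using hP, by simp [hZ]⟩
      · obtain ⟨g, hg0, hg⟩ := exists_valuation_sq_sub_eq_sq h2 h20 ρ hρ.le hΔns (P / Z)
        refine ⟨g * Valued.v Z, mul_ne_zero hg0 (by simpa using hZ), ?_⟩
        rw [mul_pow, ← hg, ← map_pow, ← map_mul]
        congr 1
        field_simp
    rw [hE, hR] at hg
    have hQ : Valued.v Q ≠ 0 := fun hQ ↦ by
      rw [hQ] at hg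
      simp [hg0, eq_comm] at hg
    have hlog := congrArg WithZero.log hg
    rw [WithZero.log_mul WithZero.exp_ne_zero (pow_ne_zero _ hQ), WithZero.log_exp,
      WithZero.log_pow, WithZero.log_pow, nsmul_eq_mul, nsmul_eq_mul] at hlog
    obtain ⟨k, rfl⟩ := htodd
    push_cast at hlog
    omega

end Stmt9
end

section
/- Let p be a dyadic finite prime of a number field F. There is no classic 2-universal quaternary lattice over O_p; that is, no classic integral O_p-lattice of rank 4 represents all classic integral O_p-lattices of rank 2. -/
/-!
Suppose a quaternary classic integral lattice `M` represents every binary one. It represents the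
hyperbolic plane `H`, which is unimodular, so `M = H ⊥ N` with `N` binary. It also represents `1`,
and as `2` lies in the maximal ideal the component in `N` of a vector of norm `1` has unit norm
`a`. Hence `F_p N = ⟨a⟩ ⊥ ⟨c⟩`, where `c` may be scaled to be a unit or a prime element; vectors of
`M` then have integral coordinates, so the integral form `2xy + az² + cw²` already represents
every binary lattice (`RepDiag a c`, obtained in `exists_repDiag`). It remains to find, for each
such `a` and `c`, a binary lattice that is not represented. Put `D = -c/a` and let `ρ` be such that
`X² + X + ρ` has no root modulo `p`; such a `ρ` exists because the residue field is finite of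
characteristic `2`.

* If `d` is not of the form `(z² - Dw²)/t²`, then `⟨ad⟩ ⊥ ⟨cd⟩` is not represented. Indeed, some
  nonzero combination of the two representing vectors has vanishing first coordinate, so that its
  norm is a value of `az² + cw²`; this makes `d` a quotient of two norms
  (`RepDiag.false_of_not_norm`). If `D` is prime, `d = 1 + 4ρ` works (`not_norm_prime`). If
  `D = 1 + π` with `π` prime and `2 = πb`, then `d = 1 + πb²ρ` works (`not_norm_unit`). Both are
  proved by dividing a putative solution repeatedly by `π`.
* If `c` is a unit, then `D` is a square times `1 + ξ` with `ξ ∈ p`, as the residue field is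
  perfect. The case of prime `ξ` is covered above. If `ξ ∈ p²`, values of `az² + cw²` never have
  order one, so either `⟨π⟩ ⊥ ⟨π⟩` (when `2 ∈ p²`) or the lattice with Gram matrix
  `(2, 1; 1, 2ρ)` (when `2` is
  prime) is not represented; in the latter case a representation would yield a root of
  `X² + X + ρ` modulo `p` (`RepDiag.false_of_defect`).
-/

/-!
STATEMENT 14: Let `p` be a dyadic finite prime of a number field `F`.  There is no classic
2-universal quaternary lattice over `O_p`: no classic integral `O_p`-lattice of rank 4
represents all classic integral `O_p`-lattices of rank 2.

Lattices over the complete discrete valuation ring `O_p` are free and encoded by Gram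
matrices (symmetric, nonzero determinant); a lattice is classic integral iff all the
entries of its Gram matrix (the values `B(x, y)` of the bilinear form on lattice vectors)
lie in `O_p`.
-/

open Matrix IsDedekindDomain HeightOneSpectrum NumberField

namespace Stmt14

variable (F : Type) [Field F] [NumberField F] (v : HeightOneSpectrum (𝓞 F))

/-- `G` is the Gram matrix of a classic integral `O_p`-lattice. -/
def IsClassicGram {ι : Type} [Fintype ι] [DecidableEq ι]
    (G : Matrix ι ι (v.adicCompletion F)) : Prop :=
  G.IsSymm ∧ G.det ≠ 0 ∧ ∀ i j, G i j ∈ v.adicCompletionIntegers F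

/-- The lattice with Gram matrix `H` represents the lattice with Gram matrix `G`. -/
def Represents {ι κ : Type} [Fintype ι] [DecidableEq ι] [Fintype κ] [DecidableEq κ]
    (H : Matrix ι ι (v.adicCompletion F)) (G : Matrix κ κ (v.adicCompletion F)) : Prop :=
  ∃ T : Matrix ι κ (v.adicCompletion F),
    (∀ i j, T i j ∈ v.adicCompletionIntegers F) ∧ Tᵀ * H * T = G

/-! ### Elements that are not norms -/

section Arithmetic

variable {O : Type} [CommRing O] [IsDomain O]

/-- For `b = 2` and `s = z - 1` this says that `z² - πw² = 1 + 4ρ` has no solution. If `π ∣ b`,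
a solution is divisible by `π` throughout; if `b` is a unit, `s / b` is a root of `X² + X + ρ`
modulo `π`. -/
theorem descent_prime {π ρ : O} (hπ : Prime π) (h2 : π ∣ 2) (hρ : ∀ x, ¬ π ∣ x ^ 2 + x + ρ) :
    ∀ (e : ℕ) (s w b u : O), IsUnit u → b = u * π ^ e →
      s ^ 2 + b * s - π * w ^ 2 - b ^ 2 * ρ ≠ 0 := by
  intro e
  induction e with
  | zero =>
    intro s w b u hu hb h
    obtain ⟨u', hu'⟩ := hu.exists_right_inv
    obtain ⟨k, hk⟩ := h2
    subst hb
    refine hρ (s * u') ⟨u' ^ 2 * w ^ 2 + k * ρ, ?_⟩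
    linear_combination u' ^ 2 * h + (ρ * (u * u' + 1) - s * u') * hu' + ρ * hk
  | succ e ih =>
    intro s w b u hu hb h
    obtain ⟨s, rfl⟩ : π ∣ s := hπ.dvd_of_dvd_pow (n := 2)
      ⟨w ^ 2 + (u * π ^ e) ^ 2 * π * ρ - u * π ^ e * s, by subst hb; linear_combination h⟩
    obtain ⟨w, rfl⟩ : π ∣ w := hπ.dvd_of_dvd_pow (n := 2)
      ⟨s ^ 2 + u * π ^ e * s - (u * π ^ e) ^ 2 * ρ, by
        subst hb
        apply mul_left_cancel₀ hπ.ne_zero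
        linear_combination -h⟩
    refine ih s w (u * π ^ e) u hu rfl ?_
    apply mul_left_cancel₀ (pow_ne_zero 2 hπ.ne_zero)
    subst hb
    linear_combination h

/-- For `2 = πb`, `m = 1` and `s = z - w - 1` this says that `z² - (1 + π)w² = 1 + πb²ρ` has no
solution. The factor `m` absorbs the power of `π` that the cubic term `bws` gains when a solution is
divided by `π`. -/
theorem descent_unit {π ρ : O} (hπ : Prime π) (hρ : ∀ x, ¬ π ∣ x ^ 2 + x + ρ) :
    ∀ (e : ℕ) (s w b m u : O), IsUnit u → b = u * π ^ e →
      s ^ 2 - π * w ^ 2 + π * b * w + π * b * m * w * s + π * b * s - π * b ^ 2 * ρ ≠ 0 := by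
  intro e
  induction e with
  | zero =>
    intro s w b m u hu hb h
    obtain ⟨u', hu'⟩ := hu.exists_right_inv
    subst hb
    obtain ⟨s, rfl⟩ : π ∣ s := hπ.dvd_of_dvd_pow (n := 2)
      ⟨w ^ 2 - u * w - u * m * w * s - u * s + u ^ 2 * ρ, by linear_combination h⟩
    refine hρ (-w * u') ⟨u' ^ 2 * (s ^ 2 + u * m * w * s + u * s), ?_⟩
    apply mul_left_cancel₀ hπ.ne_zero
    linear_combination -u' ^ 2 * h + π * (w * u' - ρ * (u * u' + 1)) * hu'
  | succ e ih =>
    intro s w b m u hu hb h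
    subst hb
    obtain ⟨s, rfl⟩ : π ∣ s := hπ.dvd_of_dvd_pow (n := 2)
      ⟨w ^ 2 - (u * π ^ (e + 1)) * w - (u * π ^ (e + 1)) * m * w * s - (u * π ^ (e + 1)) * s
        + (u * π ^ (e + 1)) ^ 2 * ρ, by linear_combination h⟩
    obtain ⟨w, rfl⟩ : π ∣ w := hπ.dvd_of_dvd_pow (n := 2)
      ⟨s ^ 2 + u * π ^ e * w + u * π ^ e * m * w * (π * s) + u * π ^ e * (π * s)
        - π * (u * π ^ e) ^ 2 * ρ, by
        apply mul_left_cancel₀ hπ.ne_zero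
        linear_combination -h⟩
    refine ih s w (u * π ^ e) (π * m) u hu rfl ?_
    apply mul_left_cancel₀ (pow_ne_zero 2 hπ.ne_zero)
    linear_combination h

variable [IsDiscreteValuationRing O]

/-- `1 + 4ρ` is not a norm from the quadratic extension obtained by adjoining `√π`. -/
theorem not_norm_prime {π ρ : O} (hπ : Irreducible π) (h2 : π ∣ 2) (h20 : (2 : O) ≠ 0)
    (hρ : ∀ x, ¬ π ∣ x ^ 2 + x + ρ) (z w t : O)
    (h : z ^ 2 - π * w ^ 2 = (1 + 4 * ρ) * t ^ 2) : t = 0 := by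
  by_contra ht
  obtain ⟨k, u, hk⟩ := IsDiscreteValuationRing.eq_unit_mul_pow_irreducible ht hπ
  obtain ⟨e, v, he⟩ := IsDiscreteValuationRing.eq_unit_mul_pow_irreducible h20 hπ
  have hP := hπ.prime
  clear ht
  induction k generalizing z w t with
  | zero =>
    obtain ⟨u', hu'⟩ := u.isUnit.exists_right_inv
    have ht1 : t * u' = 1 := by rw [hk]; linear_combination hu'
    refine descent_prime hP h2 hρ e (z * u' - 1) (w * u') 2 v v.isUnit he ?_
    linear_combination u' ^ 2 * h + (1 + 4 * ρ) * (t * u' + 1) * ht1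
  | succ k ih =>
    obtain ⟨t, rfl⟩ : π ∣ t := ⟨u * π ^ k, by rw [hk]; ring⟩
    obtain ⟨z, rfl⟩ : π ∣ z := hP.dvd_of_dvd_pow (n := 2)
      ⟨w ^ 2 + (1 + 4 * ρ) * π * t ^ 2, by linear_combination h⟩
    obtain ⟨w, rfl⟩ : π ∣ w := hP.dvd_of_dvd_pow (n := 2)
      ⟨z ^ 2 - (1 + 4 * ρ) * t ^ 2, by
        apply mul_left_cancel₀ hP.ne_zero; linear_combination -h⟩
    refine ih z w t ?_ ?_
    · apply mul_left_cancel₀ (pow_ne_zero 2 hP.ne_zero); linear_combination h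
    · apply mul_left_cancel₀ hP.ne_zero; rw [hk]; ring

/-- `1 + πb²ρ`, that is `1 + 4ρ/π`, is not a norm from the quadratic extension obtained by adjoining
`√(1 + π)`. -/
theorem not_norm_unit {π ρ b : O} (hπ : Irreducible π) (h2 : 2 = π * b) (h20 : (2 : O) ≠ 0)
    (hρ : ∀ x, ¬ π ∣ x ^ 2 + x + ρ) (z w t : O)
    (h : z ^ 2 - (1 + π) * w ^ 2 = (1 + π * b ^ 2 * ρ) * t ^ 2) : t = 0 := by
  by_contra ht
  obtain ⟨k, u, hk⟩ := IsDiscreteValuationRing.eq_unit_mul_pow_irreducible ht hπ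
  have hb : b ≠ 0 := by rintro rfl; simp at h2; exact h20 h2
  obtain ⟨e, v, he⟩ := IsDiscreteValuationRing.eq_unit_mul_pow_irreducible hb hπ
  have hP := hπ.prime
  clear ht
  induction k generalizing z w t with
  | zero =>
    obtain ⟨u', hu'⟩ := u.isUnit.exists_right_inv
    have ht1 : t * u' = 1 := by rw [hk]; linear_combination hu'
    refine descent_unit hP hρ e (z * u' - w * u' - 1) (w * u') b 1 v v.isUnit he ?_
    linear_combination u' ^ 2 * h + (1 + π * b ^ 2 * ρ) * (t * u' + 1) * ht1 -
      (w * u' + w * u' * (z * u' - w * u' - 1) + (z * u' - w * u' - 1)) * h2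
  | succ k ih =>
    obtain ⟨t, rfl⟩ : π ∣ t := ⟨u * π ^ k, by rw [hk]; ring⟩
    obtain ⟨s, rfl⟩ : ∃ s, z = w + s := ⟨z - w, by ring⟩
    obtain ⟨s, rfl⟩ : π ∣ s := hP.dvd_of_dvd_pow (n := 2)
      ⟨w ^ 2 - b * w * s + (1 + π * b ^ 2 * ρ) * π * t ^ 2, by
        linear_combination h - w * s * h2⟩
    obtain ⟨w, rfl⟩ : π ∣ w := hP.dvd_of_dvd_pow (n := 2)
      ⟨s ^ 2 + b * w * s - (1 + π * b ^ 2 * ρ) * t ^ 2, by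
        apply mul_left_cancel₀ hP.ne_zero; linear_combination -h + w * π * s * h2⟩
    refine ih (w + s) w t ?_ ?_
    · apply mul_left_cancel₀ (pow_ne_zero 2 hP.ne_zero); linear_combination h
    · apply mul_left_cancel₀ hP.ne_zero; rw [hk]; ring

end Arithmetic

/-! ### Binary lattices not represented by `2xy + az² + cw²` -/

section Diag
variable {O : Type} [CommRing O] [IsDomain O]

/-- The lattice `H ⊥ ⟨a⟩ ⊥ ⟨c⟩`, with `H` the hyperbolic plane of norm form `2xy`, represents every
binary lattice. The latter is given by the entries `p, q, r` of its Gram matrix `(p, q; q, r)`,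
assumed nondegenerate. -/
def RepDiag (a c : O) : Prop :=
  ∀ p q r : O, p * r - q ^ 2 ≠ 0 → ∃ x y z w x' y' z' w' : O,
    2 * x * y + a * z ^ 2 + c * w ^ 2 = p ∧
    x * y' + x' * y + a * z * z' + c * w * w' = q ∧
    2 * x' * y' + a * z' ^ 2 + c * w' ^ 2 = r

/-- If `d` is not a norm from the extension by `√D`, then `⟨a⟩ ⊥ ⟨-aD⟩` scaled by `d` is not
represented by `H ⊥ ⟨a⟩ ⊥ ⟨-aD⟩`. -/
theorem RepDiag.false_of_not_norm {a D d : O} (ha : a ≠ 0) (hD : D ≠ 0) (hd : d ≠ 0)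
    (h20 : (2 : O) ≠ 0)
    (hrep : RepDiag a (-a * D))
    (hn : ∀ z w t : O, z ^ 2 - D * w ^ 2 = d * t ^ 2 → t = 0) : False := by
  obtain ⟨x, y, z, w, x', y', z', w', h1, h2, h3⟩ := hrep (a * d) 0 (-a * D * d) (by
    have : a * d * (-a * D * d) - 0 ^ 2 = -(a ^ 2 * d ^ 2 * D) := by ring
    rw [this]; simp [*])
  -- a nonzero combination of the representing vectors whose first coordinate vanishes
  obtain ⟨α, β, h0, hαβ⟩ : ∃ α β : O, ¬ (α = 0 ∧ β = 0) ∧ α * x + β * x' = 0 := by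
    by_cases hx : x = 0 ∧ x' = 0
    · exact ⟨1, 0, by simp, by simp [hx.1]⟩
    · exact ⟨x', -x, fun h => hx ⟨by simpa using h.2, h.1⟩, by ring⟩
  by_cases hT : α ^ 2 - D * β ^ 2 = 0
  -- if `D` is a square, every `d` is a norm: `4d = (1 + d)² - (d - 1)²`
  · have h := hn ((1 + d) * α) ((d - 1) * β) (2 * α) (by linear_combination (d - 1) ^ 2 * hT)
    have hα : α = 0 := by simpa [h20] using h
    refine h0 ⟨hα, ?_⟩
    simpa [hα, hD] using hT
  · have key : d * (α ^ 2 - D * β ^ 2) = (α * z + β * z') ^ 2 - D * (α * w + β * w') ^ 2 := by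
      apply mul_left_cancel₀ ha
      linear_combination -α ^ 2 * h1 - 2 * α * β * h2 - β ^ 2 * h3 +
        2 * (α * y + β * y') * hαβ
    refine hT (hn ((α * z + β * z') * α - D * (α * w + β * w') * β)
      ((α * w + β * w') * α - (α * z + β * z') * β) _ ?_)
    linear_combination -(α ^ 2 - D * β ^ 2) * key

/-- The unit case in which `-c/a` is congruent to `1` modulo `π²`. -/
theorem RepDiag.false_of_defect {a ξ π ρ : O} (ha : IsUnit a) (hπ : Prime π) (h2 : π ∣ 2)
    (hloc : ∀ x, IsUnit x ∨ π ∣ x)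
    (hρ : ∀ x, ¬ π ∣ x ^ 2 + x + ρ) (hξ : π ^ 2 ∣ ξ) (hrep : RepDiag a (-a * (1 + ξ))) :
    False := by
  have hP1 : ¬ π ∣ 1 := fun h => hπ.not_isUnit (isUnit_of_dvd_one h)
  obtain ⟨b, hb⟩ := h2
  obtain ⟨ξ, rfl⟩ := hξ
  -- values of the binary part are never of order one
  have key : ∀ z w : O, π ∣ a * z ^ 2 + -a * (1 + π ^ 2 * ξ) * w ^ 2 →
      π ^ 2 ∣ a * z ^ 2 + -a * (1 + π ^ 2 * ξ) * w ^ 2 := by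
    intro z w h
    obtain ⟨k, hk⟩ : π ∣ z ^ 2 + - (1 + π ^ 2 * ξ) * w ^ 2 := by
      rw [← ha.dvd_mul_left]
      refine h.trans (dvd_of_eq (by ring))
    obtain ⟨s, rfl⟩ : ∃ s, z = w + s := ⟨z - w, by ring⟩
    obtain ⟨s, rfl⟩ : π ∣ s := hπ.dvd_of_dvd_pow (n := 2)
      ⟨k - b * w * s + π * ξ * w ^ 2, by linear_combination hk - w * s * hb⟩
    exact ⟨a * (s ^ 2 + b * w * s - ξ * w ^ 2), by linear_combination a * w * π * s * hb⟩
  -- either `2` is prime, or `π²` divides `2`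
  rcases hloc b with hbu | ⟨b, rfl⟩
  · obtain ⟨x, y, z, w, x', y', z', w', h1, h3, h4⟩ := hrep 2 1 (2 * ρ) (by
      intro h
      exact hP1 ⟨b * 2 * ρ, by linear_combination -h + 2 * ρ * hb⟩)
    set c := -a * (1 + π ^ 2 * ξ) with hc
    obtain ⟨k1, hk1⟩ := key z w ⟨b * (1 - x * y), by linear_combination h1 + (1 - x * y) * hb⟩
    obtain ⟨k2, hk2⟩ := key z' w'
      ⟨b * (ρ - x' * y'), by linear_combination h4 + (ρ - x' * y') * hb⟩
    obtain ⟨k3, hk3⟩ := key (z + z') (w + w')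
      ⟨π * k1 + π * k2 + b * (a * z * z' + c * w * w'), by
        linear_combination hk1 + hk2 + (a * z * z' + c * w * w') * hb⟩
    obtain ⟨l1, hl1⟩ : π ∣ x * y - 1 := by
      rw [← hbu.dvd_mul_left]
      refine ⟨-k1, ?_⟩
      apply mul_left_cancel₀ hπ.ne_zero
      linear_combination h1 - hk1 - (x * y - 1) * hb
    obtain ⟨l2, hl2⟩ : π ∣ x' * y' - ρ := by
      rw [← hbu.dvd_mul_left]
      refine ⟨-k2, ?_⟩
      apply mul_left_cancel₀ hπ.ne_zero
      linear_combination h4 - hk2 - (x' * y' - ρ) * hb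
    obtain ⟨l3, hl3⟩ : π ∣ a * z * z' + c * w * w' := by
      rw [← hbu.dvd_mul_left]
      refine ⟨k3 - k1 - k2, ?_⟩
      apply mul_left_cancel₀ hπ.ne_zero
      linear_combination hk3 - hk1 - hk2 - (a * z * z' + c * w * w') * hb
    -- `-x * y'` is a root of `X² + X + ρ` modulo `π`
    refine hρ (-(x * y')) ⟨-x * y' * l3 - l1 * x' * y' - l2, ?_⟩
    linear_combination x * y' * h3 - x * y' * hl3 - x' * y' * hl1 - hl2
  · obtain ⟨x, y, z, w, x', y', z', w', h1, -, -⟩ := hrep π 0 π (by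
      have : π * π - 0 ^ 2 = π ^ 2 := by ring
      rw [this]; exact pow_ne_zero 2 hπ.ne_zero)
    obtain ⟨k, hk⟩ := key z w ⟨1 - π * b * x * y, by linear_combination h1 - x * y * hb⟩
    refine hP1 ⟨k + b * x * y, ?_⟩
    apply mul_left_cancel₀ hπ.ne_zero
    linear_combination -h1 + hk + x * y * hb

end Diag

/-! ### The case distinction on `c` -/

section DVR
open IsLocalRing
variable {O : Type} [CommRing O] [IsDomain O] [IsDiscreteValuationRing O]

/-- The map `x ↦ x² + x` takes equal values at `0` and `1` in the finite residue field, hence is not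
surjective. -/
theorem exists_rho [Finite (ResidueField O)] (h2 : (2 : O) ∈ maximalIdeal O) :
    ∃ ρ : O, ∀ x : O, x ^ 2 + x + ρ ∉ maximalIdeal O := by
  have h2' : (2 : ResidueField O) = 0 := by
    have := (residue_eq_zero_iff _).2 h2
    rwa [map_ofNat] at this
  have hns : ¬ Function.Surjective (fun x : ResidueField O => x ^ 2 + x) := by
    rw [← Finite.injective_iff_surjective]
    intro h
    have : (0 : ResidueField O) = 1 := h (by
      change (0 : ResidueField O) ^ 2 + 0 = 1 ^ 2 + 1
      linear_combination -h2')
    exact zero_ne_one this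
  simp only [Function.Surjective, not_forall, not_exists] at hns
  obtain ⟨r, hr⟩ := hns
  obtain ⟨ρ, rfl⟩ := residue_surjective r
  refine ⟨ρ, fun x hx => hr (residue O x) ?_⟩
  have := (residue_eq_zero_iff _).2 hx
  simp only [map_add, map_pow] at this
  linear_combination this - residue O ρ * h2'

theorem exists_sq_sub_mem [Finite (ResidueField O)] (h2 : (2 : O) ∈ maximalIdeal O) (x : O) :
    ∃ t : O, x - t ^ 2 ∈ maximalIdeal O := by
  have h2' : (2 : ResidueField O) = 0 := by
    have := (residue_eq_zero_iff _).2 h2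
    rwa [map_ofNat] at this
  have : CharP (ResidueField O) 2 := CharTwo.of_one_ne_zero_of_two_eq_zero one_ne_zero h2'
  obtain ⟨r, hr⟩ := FiniteField.isSquare_of_char_two (ringChar.eq _ 2) (residue O x)
  obtain ⟨t, rfl⟩ := residue_surjective r
  refine ⟨t, (residue_eq_zero_iff _).1 ?_⟩
  rw [map_sub, hr, map_pow]; ring

/-- No lattice `H ⊥ ⟨a⟩ ⊥ ⟨c⟩` with `a` a unit and `c` a unit or a prime element represents all
binary lattices. -/
theorem RepDiag.false [Finite (ResidueField O)] (h2 : (2 : O) ∈ maximalIdeal O)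
    (h20 : (2 : O) ≠ 0) {a c : O} (ha : IsUnit a) (hc : IsUnit c ∨ Irreducible c)
    (hrep : RepDiag a c) : False := by
  obtain ⟨ρ, hρ⟩ := exists_rho h2
  obtain ⟨a', ha'⟩ := ha.exists_right_inv
  have hmem : ∀ {π : O}, Irreducible π → ∀ x, x ∈ maximalIdeal O ↔ π ∣ x := fun hπ x => by
    rw [hπ.maximalIdeal_eq, Ideal.mem_span_singleton]
  have hunit : ∀ x y : O, x ∈ maximalIdeal O → y = 1 + x → y ≠ 0 := by
    rintro x y hx h h0
    refine (mem_maximalIdeal _).1 hx (.of_mul_eq_one (-1) ?_)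
    linear_combination -h0 + h
  rcases hc with hc | hc
  · obtain ⟨t, ht⟩ := exists_sq_sub_mem h2 (-a' * c)
    have htu : IsUnit t := by
      by_contra h
      have h1 : t ^ 2 ∈ maximalIdeal O :=
        Ideal.pow_mem_of_mem _ ((mem_maximalIdeal _).2 h) 2 two_pos
      have h3 := Ideal.mul_mem_left _ (-a) (add_mem ht h1)
      have h4 : -a * (-a' * c - t ^ 2 + t ^ 2) = c := by linear_combination c * ha'
      rw [h4] at h3
      exact (mem_maximalIdeal _).1 h3 hc
    -- write `c = -a(1 + ξ)t²` with `ξ` in the maximal ideal, and absorb `t` into the variable `w`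
    obtain ⟨t', ht'⟩ := htu.exists_right_inv
    obtain ⟨ξ, hξ⟩ : ∃ ξ, ξ = t' ^ 2 * (-a' * c - t ^ 2) := ⟨_, rfl⟩
    have hξm : ξ ∈ maximalIdeal O := hξ ▸ Ideal.mul_mem_left _ _ ht
    have hcξ : c = -a * (1 + ξ) * t ^ 2 := by
      rw [hξ]
      linear_combination -c * ha' + (-a * a' * c - a * t ^ 2) * (t * t' + 1) * ht'
    have hrep' : RepDiag a (-a * (1 + ξ)) := by
      intro p q r hpqr
      obtain ⟨x, y, z, w, x', y', z', w', h1, h2, h3⟩ := hrep p q r hpqr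
      exact ⟨x, y, z, t * w, x', y', z', t * w', by rw [← h1, hcξ]; ring,
        by rw [← h2, hcξ]; ring, by rw [← h3, hcξ]; ring⟩
    obtain ⟨π, hπ⟩ := IsDiscreteValuationRing.exists_irreducible O
    obtain ⟨η, rfl⟩ := (hmem hπ _).1 hξm
    by_cases hη : IsUnit η
    · have hπη : Irreducible (π * η) := (irreducible_mul_isUnit hη).2 hπ
      obtain ⟨b, hb⟩ := (hmem hπη _).1 h2
      refine hrep'.false_of_not_norm ha.ne_zero (hunit _ _ hξm rfl)
        (hunit _ _ ?_ rfl) h20 (not_norm_unit hπη hb h20 fun x hx => hρ x ((hmem hπη _).2 hx))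
      rw [mul_assoc]
      exact Ideal.mul_mem_right _ _ hξm
    · obtain ⟨η, rfl⟩ := (hmem hπ _).1 ((mem_maximalIdeal _).2 hη)
      refine hrep'.false_of_defect ha hπ.prime ((hmem hπ _).1 h2) (fun x => ?_)
        (fun x hx => hρ x ((hmem hπ _).2 hx)) ⟨η, by ring⟩
      rw [← hmem hπ, mem_maximalIdeal]
      exact em _
  · have hD : Irreducible (-a' * c) := by
      have : IsUnit (-a') := (IsUnit.of_mul_eq_one a (by rw [mul_comm]; exact ha')).neg
      exact (irreducible_isUnit_mul this).2 hc
    have hcD : c = -a * (-a' * c) := by linear_combination -c * ha'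
    rw [hcD] at hrep
    refine hrep.false_of_not_norm ha.ne_zero hD.ne_zero (hunit (4 * ρ) _ ?_ rfl) h20
      (not_norm_prime hD ((hmem hD _).1 h2) h20 fun x hx => hρ x ((hmem hD _).2 hx))
    have : 4 * ρ = 2 * ρ * 2 := by ring
    rw [this]
    exact Ideal.mul_mem_left _ _ h2

end DVR
/-! ### Splitting off a hyperbolic plane -/

section Geometry

open IsLocalRing
variable {O K : Type} [CommRing O] [IsDomain O] [IsDiscreteValuationRing O]
  [Field K] [Algebra O K] [IsFractionRing O K]

theorem exists_scale {γ : K} (hγ : γ ≠ 0) :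
    ∃ (c : O) (s : K), s ≠ 0 ∧ γ * s ^ 2 = algebraMap O K c ∧ (IsUnit c ∨ Irreducible c) := by
  obtain ⟨π, hπ⟩ := IsDiscreteValuationRing.exists_irreducible O
  obtain ⟨α, β, hβ, rfl⟩ := IsFractionRing.div_surjective (A := O) γ
  have hβ0 : β ≠ 0 := nonZeroDivisors.ne_zero hβ
  have inj := IsFractionRing.injective O K
  have hβK : algebraMap O K β ≠ 0 := (map_ne_zero_iff _ inj).2 hβ0
  have hα0 : α ≠ 0 := by rintro rfl; simp at hγ
  have hπK : algebraMap O K π ≠ 0 := (map_ne_zero_iff _ inj).2 hπ.ne_zero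
  obtain ⟨m, u, hm⟩ :=
    IsDiscreteValuationRing.eq_unit_mul_pow_irreducible (mul_ne_zero hα0 hβ0) hπ
  have hmK := congrArg (algebraMap O K) hm
  simp only [map_mul, map_pow] at hmK
  rcases Nat.even_or_odd' m with ⟨k, rfl | rfl⟩
  · refine ⟨u, algebraMap O K β / algebraMap O K π ^ k, div_ne_zero hβK (pow_ne_zero _ hπK), ?_,
      .inl u.isUnit⟩
    field_simp
    linear_combination hmK
  · refine ⟨u * π, algebraMap O K β / algebraMap O K π ^ k, div_ne_zero hβK (pow_ne_zero _ hπK),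
      ?_, .inr ((irreducible_units_mul u).2 hπ)⟩
    rw [map_mul]
    field_simp
    linear_combination hmK

/-- As `c` has order at most one, `cw²` is integral only if `w` is. -/
theorem mem_range_of_mul_sq {c : O} (hc : IsUnit c ∨ Irreducible c) {w : K}
    (h : algebraMap O K c * w ^ 2 ∈ (algebraMap O K).range) : w ∈ (algebraMap O K).range := by
  rcases ValuationRing.isInteger_or_isInteger O w with hw | ⟨o, ho⟩
  · exact hw
  by_cases hw0 : w = 0
  · rw [hw0]; exact zero_mem _
  obtain ⟨d, hd⟩ := h
  have hcd : c = o * o * d := by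
    apply IsFractionRing.injective O K
    rw [map_mul, map_mul, hd, ho]
    field_simp
  have ho' : IsUnit o := by
    rcases hc with hc | hc
    · rw [hcd] at hc
      exact isUnit_of_mul_isUnit_left (isUnit_of_mul_isUnit_left hc)
    · by_contra hno
      rw [mul_assoc] at hcd
      exact ((hc.isUnit_or_isUnit hcd).resolve_left hno) |> fun h =>
        hno (isUnit_of_mul_isUnit_left h)
  obtain ⟨o', ho''⟩ := ho'.exists_right_inv
  refine ⟨o', ?_⟩
  have := congrArg (algebraMap O K) ho''
  rw [map_mul, ho, map_one] at this
  field_simp at this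
  exact this

/-- A quaternary lattice representing all binary ones contains `H ⊥ ⟨a⟩` with `a` a unit, and is
contained in `H ⊥ ⟨a⟩ ⊥ ⟨c⟩` with `c` a unit or a prime element. -/
theorem exists_repDiag (h2 : (2 : O) ∈ maximalIdeal O) (M : Matrix (Fin 4) (Fin 4) K)
    (hsymm : M.IsSymm) (hdet : M.det ≠ 0) (hint : ∀ i j, M i j ∈ (algebraMap O K).range)
    (hrep : ∀ p q r : O, p * r - q ^ 2 ≠ 0 → ∃ X Y : Fin 4 → K,
      (∀ i, X i ∈ (algebraMap O K).range) ∧ (∀ i, Y i ∈ (algebraMap O K).range) ∧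
      X ⬝ᵥ M *ᵥ X = algebraMap O K p ∧ X ⬝ᵥ M *ᵥ Y = algebraMap O K q ∧
      Y ⬝ᵥ M *ᵥ Y = algebraMap O K r) :
    ∃ a c : O, IsUnit a ∧ (IsUnit c ∨ Irreducible c) ∧ RepDiag a c := by
  have inj := IsFractionRing.injective O K
  obtain ⟨B, hB⟩ : ∃ B : LinearMap.BilinForm K (Fin 4 → K), ∀ x y, B x y = x ⬝ᵥ M *ᵥ y :=
    ⟨M.toBilin', fun x y => Matrix.toBilin'_apply' M x y⟩
  have hcomm : ∀ x y, B x y = B y x := fun x y => by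
    rw [hB, hB, dotProduct_mulVec, ← mulVec_transpose, hsymm.eq, dotProduct_comm]
  have hBint : ∀ x y : Fin 4 → K, (∀ i, x i ∈ (algebraMap O K).range) →
      (∀ i, y i ∈ (algebraMap O K).range) → B x y ∈ (algebraMap O K).range := by
    intro x y hx hy
    rw [hB]
    simp only [dotProduct, Matrix.mulVec]
    exact sum_mem fun i _ => mul_mem (hx i) (sum_mem fun j _ => mul_mem (hint i j) (hy j))
  simp only [← hB] at hrep
  obtain ⟨X, Y, hX, hY, hXX, hXY, hYY⟩ := hrep 0 1 0 (by simp)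
  obtain ⟨V, -, hV, -, hVV, -, -⟩ := hrep 1 0 1 (by simp)
  rw [map_zero] at hXX hYY
  rw [map_one] at hXY hVV
  have hYX : B Y X = 1 := by rw [hcomm, hXY]
  obtain ⟨f, hf⟩ := hBint V X hV hX
  obtain ⟨g, hg⟩ := hBint V Y hV hY
  have hf' : B X V = algebraMap O K f := by rw [hcomm, hf]
  have hg' : B Y V = algebraMap O K g := by rw [hcomm, hg]
  -- the component of `V` orthogonal to the hyperbolic plane spanned by `X` and `Y`
  obtain ⟨n, hn⟩ : ∃ n, n = V - algebraMap O K g • X - algebraMap O K f • Y := ⟨_, rfl⟩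
  have hnint : ∀ i, n i ∈ (algebraMap O K).range := fun i => by
    rw [hn]
    exact sub_mem (sub_mem (hV i) (mul_mem ⟨g, rfl⟩ (hX i))) (mul_mem ⟨f, rfl⟩ (hY i))
  have hXn : B X n = 0 := by simp [-algebraMap_smul, hn, hXX, hXY, hf']
  have hYn : B Y n = 0 := by simp [-algebraMap_smul, hn, hYY, hYX, hg']
  have hnX : B n X = 0 := by rw [hcomm, hXn]
  have hnY : B n Y = 0 := by rw [hcomm, hYn]
  obtain ⟨a, ha⟩ : ∃ a, a = 1 - f * g * 2 := ⟨_, rfl⟩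
  have hnn : B n n = algebraMap O K a := by
    have h1 : B n n = B n V := by
      conv_lhs => rw [show B n n = B n (V - algebraMap O K g • X - algebraMap O K f • Y) by
        rw [← hn]]
      simp [-algebraMap_smul, hnX, hnY]
    rw [h1, hcomm, hn, ha]
    simp [-algebraMap_smul, ← hf, ← hg, hVV, map_ofNat]
    ring
  have hau : IsUnit a := by
    by_contra h
    refine (mem_maximalIdeal (1 : O)).1 ?_ isUnit_one
    have h1 := add_mem ((mem_maximalIdeal _).2 h) (Ideal.mul_mem_left _ (f * g) h2)
    rw [ha] at h1
    rwa [sub_add_cancel] at h1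
  obtain ⟨a', ha'⟩ := hau.exists_right_inv
  have haK : algebraMap O K a ≠ 0 := (map_ne_zero_iff _ inj).2 hau.ne_zero
  -- a nonzero vector orthogonal to `X`, `Y` and `n`
  obtain ⟨l, hl0, hXl, hYl, hnl⟩ : ∃ l : Fin 4 → K, l ≠ 0 ∧ B X l = 0 ∧ B Y l = 0 ∧ B n l = 0 := by
    have hk : LinearMap.ker (LinearMap.pi ![B X, B Y, B n]) ≠ ⊥ :=
      LinearMap.ker_ne_bot_of_finrank_lt (by simp)
    obtain ⟨l, hl, hl0⟩ := Submodule.exists_mem_ne_zero_of_ne_bot hk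
    rw [LinearMap.mem_ker] at hl
    exact ⟨l, hl0, by simpa using congrFun hl 0, by simpa using congrFun hl 1,
      by simpa using congrFun hl 2⟩
  have hlX : B l X = 0 := by rw [hcomm, hXl]
  have hlY : B l Y = 0 := by rw [hcomm, hYl]
  have hln : B l n = 0 := by rw [hcomm, hnl]
  have hspan : ∀ W : Fin 4 → K, ∃ x y z w : K, W = x • X + y • Y + z • n + w • l := by
    have hli : LinearIndependent K ![X, Y, n, l] := by
      rw [Fintype.linearIndependent_iff]
      intro t ht
      simp only [Fin.sum_univ_four, Matrix.cons_val] at ht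
      have h0 := congrArg (B Y) ht
      have h1 := congrArg (B X) ht
      have h3 := congrArg (B n) ht
      simp [hYX, hYY, hYn, hYl] at h0
      simp [hXX, hXY, hXn, hXl] at h1
      simp [hnX, hnY, hnn, hnl, haK] at h3
      simp [h0, h1, h3, hl0] at ht
      intro i
      fin_cases i <;> assumption
    have htop := hli.span_eq_top_of_card_eq_finrank (by simp)
    intro W
    have hW : W ∈ Submodule.span K (Set.range ![X, Y, n, l]) := htop ▸ Submodule.mem_top
    obtain ⟨t, rfl⟩ := (Submodule.mem_span_range_iff_exists_fun K).1 hW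
    exact ⟨t 0, t 1, t 2, t 3, by simp [Fin.sum_univ_four]⟩
  have hll : B l l ≠ 0 := by
    intro h
    refine hdet (Matrix.exists_mulVec_eq_zero_iff.1 ⟨l, hl0, ?_⟩)
    refine dotProduct_eq_zero _ fun W => ?_
    obtain ⟨x, y, z, w, rfl⟩ := hspan W
    rw [dotProduct_comm, ← hB]
    simp [hXl, hYl, hnl, h]
  obtain ⟨c, s, hs, hcs, hc⟩ := exists_scale (O := O) hll
  -- rescaled orthogonal coordinates; they are integral on integral vectors
  have hcoord : ∀ W : Fin 4 → K, (∀ i, W i ∈ (algebraMap O K).range) → ∃ x y z w : O,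
      W = algebraMap O K x • X + algebraMap O K y • Y + algebraMap O K z • n
        + algebraMap O K w • s • l := by
    intro W hW
    obtain ⟨x, y, z, w, hWe⟩ := hspan W
    obtain ⟨x', hx⟩ : x ∈ (algebraMap O K).range := by
      have := hBint Y W hY hW
      rw [hWe] at this
      simpa [hYX, hYY, hYn, hYl] using this
    obtain ⟨y', hy⟩ : y ∈ (algebraMap O K).range := by
      have := hBint X W hX hW
      rw [hWe] at this
      simpa [hXX, hXY, hXn, hXl] using this
    obtain ⟨z', hz⟩ : z ∈ (algebraMap O K).range := by
      have h := hBint n W hnint hW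
      rw [hWe] at h
      simp only [map_add, map_smul, hnX, hnY, hnn, hnl, smul_eq_mul, mul_zero, zero_add,
        add_zero] at h
      have h' := mul_mem h (⟨a', rfl⟩ : algebraMap O K a' ∈ (algebraMap O K).range)
      rwa [mul_assoc, ← map_mul, ha', map_one, mul_one] at h'
    obtain ⟨w', hw⟩ : w / s ∈ (algebraMap O K).range := by
      apply mem_range_of_mul_sq hc
      have h := hBint W W hW hW
      have h' : algebraMap O K c * (w / s) ^ 2 =
          B W W - algebraMap O K (2 * x' * y' + a * z' ^ 2) := by
        rw [hWe, ← hcs, ← hx, ← hy, ← hz]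
        simp [-algebraMap_smul, map_ofNat, hXX, hXY, hYX, hYY, hXn, hYn, hXl, hYl, hnX, hnY, hnn,
      hnl, hlX, hlY, hln]
        field_simp
        ring
      rw [h']
      exact sub_mem h ⟨_, rfl⟩
    refine ⟨x', y', z', w', ?_⟩
    rw [hx, hy, hz, hw, smul_smul, div_mul_cancel₀ _ hs]
    exact hWe
  refine ⟨a, c, hau, hc, fun p q r hpqr => ?_⟩
  obtain ⟨P, Q, hP, hQ, hPP, hPQ, hQQ⟩ := hrep p q r hpqr
  obtain ⟨x, y, z, w, hPe⟩ := hcoord P hP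
  obtain ⟨x', y', z', w', hQe⟩ := hcoord Q hQ
  refine ⟨x, y, z, w, x', y', z', w', inj ?_, inj ?_, inj ?_⟩
  · rw [← hPP, hPe]
    simp [-algebraMap_smul, map_ofNat, hXX, hXY, hYX, hYY, hXn, hYn, hXl, hYl, hnX, hnY, hnn,
      hnl, hlX, hlY, hln, ← hcs]
    ring
  · rw [← hPQ, hPe, hQe]
    simp [-algebraMap_smul, hXX, hXY, hYX, hYY, hXn, hYn, hXl, hYl, hnX, hnY, hnn,
      hnl, hlX, hlY, hln, ← hcs]
    ring
  · rw [← hQQ, hQe]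
    simp [-algebraMap_smul, map_ofNat, hXX, hXY, hYX, hYY, hXn, hYn, hXl, hYl, hnX, hnY, hnn,
      hnl, hlX, hlY, hln, ← hcs]
    ring

end Geometry

/-! ### Integers of the completion -/

section Completion

theorem mem_maximalIdeal_iff_valued (x : v.adicCompletionIntegers F) :
    x ∈ IsLocalRing.maximalIdeal (v.adicCompletionIntegers F) ↔
      Valued.v (x : v.adicCompletion F) < 1 := by
  exact Valuation.mem_maximalIdeal_iff _ _

theorem algebraMap_mem_maximalIdeal (r : 𝓞 F) (h : r ∈ v.asIdeal) :
    algebraMap (𝓞 F) (v.adicCompletionIntegers F) r ∈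
      IsLocalRing.maximalIdeal (v.adicCompletionIntegers F) := by
  rw [mem_maximalIdeal_iff_valued]
  have := (v.valuation_lt_one_iff_mem (K := F) r).2 h
  rw [← v.valuedAdicCompletion_eq_valuation] at this
  exact this

/-- `𝓞 F` is dense in the completed integers, to first order. -/
theorem exists_sub_mem_maximalIdeal (x : v.adicCompletionIntegers F) :
    ∃ r : 𝓞 F, x - algebraMap (𝓞 F) (v.adicCompletionIntegers F) r ∈
      IsLocalRing.maximalIdeal (v.adicCompletionIntegers F) := by
  have hopen : IsOpen {y : v.adicCompletion F | Valued.v ((x : v.adicCompletion F) - y) < 1} := by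
    have : IsOpen {y : v.adicCompletion F | Valued.v y < 1} := by
      simpa using Valued.isOpen_ball (v.adicCompletion F) 1
    exact this.preimage (by fun_prop : Continuous fun y : v.adicCompletion F =>
      (x : v.adicCompletion F) - y)
  obtain ⟨y, hy⟩ := (v.denseRange_algebraMap (K := F)).exists_mem_open hopen ⟨x, by simp⟩
  simp only [Set.mem_ofPred_eq] at hy
  have hy1 : v.valuation F y ≤ 1 := by
    rw [← v.valuedAdicCompletion_eq_valuation']
    have : (algebraMap F (v.adicCompletion F) y) =
        x - (x - algebraMap F (v.adicCompletion F) y) := by ring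
    change Valued.v (algebraMap F (v.adicCompletion F) y) ≤ 1
    rw [this]
    exact (Valued.v.map_sub _ _).trans (max_le x.2 hy.le)
  obtain ⟨r, hr⟩ := v.exists_valuation_sub_lt_of_integer (K := F) hy1 (γ := 1)
  refine ⟨r, ?_⟩
  rw [mem_maximalIdeal_iff_valued]
  have hr' : Valued.v (algebraMap F (v.adicCompletion F) (algebraMap (𝓞 F) F r - y)) < 1 := by
    refine lt_of_eq_of_lt ?_ hr
    exact v.valuedAdicCompletion_eq_valuation' _
  have hsub : ((x - algebraMap (𝓞 F) (v.adicCompletionIntegers F) r : v.adicCompletionIntegers F) :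
      v.adicCompletion F) = (x - algebraMap F (v.adicCompletion F) y) -
        algebraMap F (v.adicCompletion F) (algebraMap (𝓞 F) F r - y) := by
    rw [map_sub]
    change (x : v.adicCompletion F) - algebraMap F (v.adicCompletion F) (algebraMap (𝓞 F) F r) = _
    ring
  rw [hsub]
  exact (Valued.v.map_sub _ _).trans_lt (max_lt hy hr')

theorem finite_residueField : Finite (IsLocalRing.ResidueField (v.adicCompletionIntegers F)) := by
  have : Finite (𝓞 F ⧸ v.asIdeal) := v.asIdeal.finiteQuotientOfFreeOfNeBot v.ne_bot
  let f : 𝓞 F ⧸ v.asIdeal →+* IsLocalRing.ResidueField (v.adicCompletionIntegers F) :=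
    Ideal.Quotient.lift _ ((IsLocalRing.residue _).comp
        (algebraMap (𝓞 F) (v.adicCompletionIntegers F)))
      (fun a ha => (IsLocalRing.residue_eq_zero_iff _).2 (algebraMap_mem_maximalIdeal F v a ha))
  refine Finite.of_surjective f fun z => ?_
  obtain ⟨x, rfl⟩ := IsLocalRing.residue_surjective z
  obtain ⟨r, hr⟩ := exists_sub_mem_maximalIdeal F v x
  refine ⟨Ideal.Quotient.mk _ r, ?_⟩
  have := (IsLocalRing.residue_eq_zero_iff _).2 hr
  rw [map_sub, sub_eq_zero] at this
  simpa [f] using this.symm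

theorem two_ne_zero_integers : (2 : v.adicCompletionIntegers F) ≠ 0 := by
  have : algebraMap (𝓞 F) (v.adicCompletionIntegers F) 2 ≠ 0 :=
    (FaithfulSMul.algebraMap_injective _ _).ne_iff' (map_zero _) |>.2 two_ne_zero
  rwa [map_ofNat] at this

end Completion

/-! ### The theorem -/

theorem no_classic_twoUniversal_quaternary
    (hdyadic : (2 : 𝓞 F) ∈ v.asIdeal) :
    ¬ ∃ M : Matrix (Fin 4) (Fin 4) (v.adicCompletion F),
        IsClassicGram F v M ∧
        ∀ G : Matrix (Fin 2) (Fin 2) (v.adicCompletion F),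
          IsClassicGram F v G → Represents F v M G := by
  rintro ⟨M, ⟨hsymm, hdet, hint⟩, hM⟩
  have h2 : (2 : v.adicCompletionIntegers F) ∈
      IsLocalRing.maximalIdeal (v.adicCompletionIntegers F) := by
    have := algebraMap_mem_maximalIdeal F v 2 hdyadic
    rwa [map_ofNat] at this
  have := finite_residueField F v
  have hr : ∀ x : v.adicCompletion F, x ∈ (algebraMap (v.adicCompletionIntegers F)
      (v.adicCompletion F)).range ↔ x ∈ v.adicCompletionIntegers F :=
    fun x => ⟨by rintro ⟨y, rfl⟩; exact y.2, fun hx => ⟨⟨x, hx⟩, rfl⟩⟩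
  obtain ⟨a, c, ha, hc, hrep⟩ := exists_repDiag h2 M hsymm hdet
    (fun i j => (hr _).2 (hint i j)) (fun p q r hpqr => by
      obtain ⟨T, hT, hG⟩ := hM !![(p : v.adicCompletion F), q; q, r] ⟨by
          ext i j; fin_cases i <;> fin_cases j <;> rfl, by
          rw [Matrix.det_fin_two_of]
          intro h
          apply hpqr
          apply Subtype.ext
          push_cast
          linear_combination h, by
          intro i j; fin_cases i <;> fin_cases j <;> exact Subtype.property _⟩
      have key : ∀ i j, (fun k => T k i) ⬝ᵥ M *ᵥ (fun k => T k j) =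
          !![(p : v.adicCompletion F), q; q, r] i j := by
        intro i j
        rw [← hG, Matrix.mul_assoc]
        rfl
      exact ⟨fun k => T k 0, fun k => T k 1, fun k => (hr _).2 (hT k 0),
        fun k => (hr _).2 (hT k 1), key 0 0, key 0 1, key 1 1⟩)
  exact hrep.false h2 (two_ne_zero_integers F v) ha hc

end Stmt14
end
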